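/- arXiv:2405.10179 — 5 statements merged into one kernel-verified Lean document; each statement's English description precedes it below -/
import Mathlib

section
/- In the linear setting, assume (C1): lim_{n→∞} (1 − h_n)·ln n = 0, and (C2): sup_{k≥0} (b_k − b_{k+1})/b_{k+1} < ∞. Then lim_{n→∞} H_{h_n}(J_n) = 1. -/
open Set Filter MeasureTheory Topology

noncomputable section

/-- Composition `g_{i₁} ∘ g_{i₂} ∘ ⋯ ∘ g_{i_l}` along a finite word. -/
def wordComp (g : ℕ → ℝ → ℝ) : List ℕ → ℝ → ℝ
  | [] => id
  | k :: w => g k ∘ wordComp g w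

/-- The limit set `J_n` of the IFS `S_n = {g_1, …, g_n}`. -/
def limitSet (g : ℕ → ℝ → ℝ) (n : ℕ) : Set ℝ :=
  ⋂ l : ℕ, ⋃ w ∈ {w : List ℕ | w.length = l + 1 ∧ ∀ i ∈ w, 1 ≤ i ∧ i ≤ n},
    wordComp g w '' Set.Icc (0 : ℝ) 1

/-- The decreasing affine map `g_k(x) = b_{k-1} - (b_{k-1} - b_k)·x`. -/
def gAff (b : ℕ → ℝ) (k : ℕ) (x : ℝ) : ℝ := b (k - 1) - (b (k - 1) - b k) * x

lemma holder_sum {ι : Type*} (t : Finset ι) (f : ι → ℝ) (hf : ∀ i ∈ t, 0 ≤ f i) {s : ℝ}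
    (hs0 : 0 < s) (hs1 : s ≤ 1) :
    ∑ i ∈ t, f i ^ s ≤ (t.card : ℝ) ^ (1 - s) * (∑ i ∈ t, f i) ^ s := by
  have h1 := Real.rpow_sum_le_const_mul_sum_rpow_of_nonneg t (f := fun i => f i ^ s) (p := 1 / s)
    (by rw [le_div_iff₀ hs0]; linarith) (fun i hi => Real.rpow_nonneg (hf i hi) s)
  have h2 : ∑ i ∈ t, (f i ^ s) ^ (1 / s) = ∑ i ∈ t, f i := by
    apply Finset.sum_congr rfl
    intro i hi
    rw [← Real.rpow_mul (hf i hi), mul_one_div_cancel hs0.ne', Real.rpow_one]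
  rw [h2] at h1
  have hA : 0 ≤ ∑ i ∈ t, f i ^ s := Finset.sum_nonneg fun i hi => Real.rpow_nonneg (hf i hi) s
  have hB : 0 ≤ ∑ i ∈ t, f i := Finset.sum_nonneg hf
  have h3 := Real.rpow_le_rpow (Real.rpow_nonneg hA _) h1 hs0.le
  rw [← Real.rpow_mul hA, one_div_mul_cancel hs0.ne', Real.rpow_one,
    Real.mul_rpow (Real.rpow_nonneg (Nat.cast_nonneg _) _) hB,
    ← Real.rpow_mul (Nat.cast_nonneg _)] at h3
  convert h3 using 3
  field_simp

lemma two_sum {s : ℝ} (hs0 : 0 < s) (hs1 : s ≤ 1) {p q : ℝ} (hp : 0 ≤ p) (hq : 0 ≤ q) :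
    p ^ s + q ^ s ≤ 2 ^ (1 - s) * (p + q) ^ s := by
  have := holder_sum (Finset.univ : Finset (Fin 2)) ![p, q]
    (by intro i _; fin_cases i <;> simpa) hs0 hs1
  simpa [Fin.sum_univ_two] using this

lemma three_sum {s : ℝ} (hs0 : 0 < s) (hs1 : s ≤ 1) {p q r : ℝ} (hp : 0 ≤ p) (hq : 0 ≤ q)
    (hr : 0 ≤ r) :
    p ^ s + q ^ s + r ^ s ≤ 3 ^ (1 - s) * (p + q + r) ^ s := by
  have := holder_sum (Finset.univ : Finset (Fin 3)) ![p, q, r]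
    (by intro i _; fin_cases i <;> simpa) hs0 hs1
  simpa [Fin.sum_univ_three] using this

lemma tele (b : ℕ → ℝ) {i j : ℕ} (hij : i ≤ j) :
    ∑ k ∈ Finset.Ico i j, (b k - b (k + 1)) = b i - b j := by
  induction j, hij using Nat.le_induction with
  | base => simp
  | succ j hij ih => rw [Finset.sum_Ico_succ_top hij, ih]; ring

lemma full_sum (b : ℕ → ℝ) (hb : StrictAnti b) {s : ℝ} (hs0 : 0 < s) (hs1 : s ≤ 1)
    {i j n : ℕ} (hij : i ≤ j) (hjn : j ≤ n) :
    ∑ k ∈ Finset.Ico i j, (b k - b (k + 1)) ^ s ≤ (n : ℝ) ^ (1 - s) * (b i - b j) ^ s := by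
  have h0 : ∀ k, 0 ≤ b k - b (k + 1) := fun k => sub_nonneg.2 (hb.antitone (Nat.le_succ k))
  refine (holder_sum _ _ (fun k _ => h0 k) hs0 hs1).trans ?_
  rw [tele b hij]
  have : 0 ≤ b i - b j := sub_nonneg.2 (hb.antitone hij)
  gcongr
  simp; omega

/-- contraction -/
lemma contr {s M K N th : ℝ} (hs0 : 0 < s) (hs1 : s ≤ 1) (hM : 0 ≤ M) (hN : 1 ≤ N) (hK : 1 ≤ K)
    (hth : (M / (1 + M)) ^ s ≤ th)
    (hKN : 2 ^ (1 - s) + (N - 1) + (K - 1) * th ≤ K)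
    {p q : ℝ} (hp : 0 ≤ p) (hq : 0 ≤ q) (hqp : q ≤ M * p) :
    N * p ^ s + K * q ^ s ≤ K * (p + q) ^ s := by
  have h1 := two_sum hs0 hs1 hp hq
  have h2 : p ^ s ≤ (p + q) ^ s := by gcongr; linarith
  have h3 : q ^ s ≤ th * (p + q) ^ s := by
    have : q ≤ M / (1 + M) * (p + q) := by
      rw [div_mul_eq_mul_div, le_div_iff₀ (by linarith)]; nlinarith
    calc q ^ s ≤ (M / (1 + M) * (p + q)) ^ s := by gcongr
      _ = (M / (1 + M)) ^ s * (p + q) ^ s := Real.mul_rpow (by positivity) (by positivity)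
      _ ≤ _ := by gcongr
  have h4 : 0 ≤ (p + q) ^ s := by positivity
  nlinarith [mul_le_mul_of_nonneg_left h2 (sub_nonneg.2 hN),
    mul_le_mul_of_nonneg_left h3 (sub_nonneg.2 hK), mul_le_mul_of_nonneg_right hKN h4]

def Tm (b : ℕ → ℝ) (n : ℕ) (s : ℝ) (ν : Measure ℝ) : Measure ℝ :=
  ∑ k ∈ Finset.range n, ENNReal.ofReal ((b k - b (k + 1)) ^ s) • ν.map (gAff b (k + 1))

lemma gAff_succ (b : ℕ → ℝ) (k : ℕ) (x : ℝ) :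
    gAff b (k + 1) x = b k - (b k - b (k + 1)) * x := by simp [gAff]

lemma gAff_cont (b : ℕ → ℝ) (k : ℕ) : Continuous (gAff b k) := by
  unfold gAff; fun_prop

lemma Tm_apply (b : ℕ → ℝ) (n : ℕ) (s : ℝ) (ν : Measure ℝ) {S : Set ℝ} (hS : MeasurableSet S) :
    Tm b n s ν S =
      ∑ k ∈ Finset.range n, ENNReal.ofReal ((b k - b (k + 1)) ^ s) * ν (gAff b (k + 1) ⁻¹' S) := by
  simp only [Tm, Measure.coe_finsetSum, Finset.sum_apply, Measure.smul_apply, smul_eq_mul]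
  apply Finset.sum_congr rfl
  intro k _
  rw [Measure.map_apply (gAff_cont b _).measurable hS]

lemma Tm_real (b : ℕ → ℝ) (hb : StrictAnti b) (n : ℕ) (s : ℝ) (ν : Measure ℝ)
    [IsFiniteMeasure ν] {S : Set ℝ} (hS : MeasurableSet S) :
    (Tm b n s ν).real S =
      ∑ k ∈ Finset.range n, (b k - b (k + 1)) ^ s * ν.real (gAff b (k + 1) ⁻¹' S) := by
  have h0 : ∀ k, 0 ≤ b k - b (k + 1) := fun k => sub_nonneg.2 (hb.antitone (Nat.le_succ k))
  rw [measureReal_def, Tm_apply b n s ν hS, ENNReal.toReal_sum]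
  · apply Finset.sum_congr rfl
    intro k _
    rw [ENNReal.toReal_mul, ENNReal.toReal_ofReal (Real.rpow_nonneg (h0 k) _), measureReal_def]
  · intro k _
    exact ENNReal.mul_ne_top ENNReal.ofReal_ne_top (measure_ne_top _ _)

lemma gAff_mem (b : ℕ → ℝ) (hb : StrictAnti b) (k : ℕ) {x : ℝ} (hx : x ∈ Ioo (0:ℝ) 1) :
    gAff b (k + 1) x ∈ Ioo (b (k + 1)) (b k) := by
  have : 0 < b k - b (k + 1) := sub_pos.2 (hb (Nat.lt_succ_self k))
  rw [gAff_succ]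
  constructor <;> nlinarith [hx.1, hx.2]

lemma term_zero (b : ℕ → ℝ) (hb : StrictAnti b) (ν : Measure ℝ)
    (hZ : ν (Ioo (0:ℝ) 1)ᶜ = 0) (k : ℕ) {S : Set ℝ}
    (hS : ∀ x ∈ S, x ≤ b (k + 1) ∨ b k ≤ x) : ν.real (gAff b (k + 1) ⁻¹' S) = 0 := by
  rw [measureReal_def, measure_mono_null _ hZ]; · rfl
  intro x hx hx'
  have := gAff_mem b hb k hx'
  rcases hS _ hx with h | h
  · exact absurd this.1 (not_lt.2 h)
  · exact absurd this.2 (not_lt.2 h)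

/-- restricting the sum to a block of indices -/
lemma Tm_block (b : ℕ → ℝ) (hb : StrictAnti b) (n : ℕ) {s : ℝ} (hs0 : 0 < s) (hs1 : s ≤ 1)
    (ν : Measure ℝ) [IsProbabilityMeasure ν] (hZ : ν (Ioo (0:ℝ) 1)ᶜ = 0)
    {i j : ℕ} (hij : i ≤ j) (hjn : j ≤ n) {x : ℝ} (hx : b j ≤ x ∨ j = n) :
    (Tm b n s ν).real (Icc x (b i)) ≤ (n : ℝ) ^ (1 - s) * (b i - b j) ^ s := by
  have h0 : ∀ k, 0 ≤ b k - b (k + 1) := fun k => sub_nonneg.2 (hb.antitone (Nat.le_succ k))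
  refine le_trans ?_ (full_sum b hb hs0 hs1 hij hjn)
  rw [Tm_real b hb n s ν measurableSet_Icc]
  have : Finset.Ico i j ⊆ Finset.range n := by
    intro k; simp; omega
  rw [← Finset.sum_subset this]
  · apply Finset.sum_le_sum
    intro k _
    exact mul_le_of_le_one_right (Real.rpow_nonneg (h0 k) _) measureReal_le_one
  · intro k hk hk'
    rw [term_zero b hb ν hZ k, mul_zero]
    intro y hy
    simp only [Finset.mem_range, Finset.mem_Ico, not_and, not_lt] at hk hk'
    by_cases hki : k < i
    · left; exact hy.2.trans (hb.antitone hki)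
    · right
      have hjk := hk' (by omega)
      rcases hx with hx | hx
      · exact (hb.antitone hjk).trans (hx.trans hy.1)
      · omega

lemma Tm_single (b : ℕ → ℝ) (hb : StrictAnti b) (n : ℕ) {s : ℝ} 
    (ν : Measure ℝ) [IsProbabilityMeasure ν] (hZ : ν (Ioo (0:ℝ) 1)ᶜ = 0)
    {i : ℕ} (hi : i < n) {x y : ℝ} (hx : b (i + 1) ≤ x) (hy : y ≤ b i) :
    (Tm b n s ν).real (Icc x y) = (b i - b (i + 1)) ^ s *
      ν.real (Icc ((b i - y) / (b i - b (i + 1))) ((b i - x) / (b i - b (i + 1)))) := by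
  have h0 : 0 < b i - b (i + 1) := sub_pos.2 (hb (Nat.lt_succ_self i))
  rw [Tm_real b hb n s ν measurableSet_Icc, Finset.sum_eq_single i]
  · congr 2
    ext z
    simp only [mem_preimage, gAff_succ, mem_Icc, div_le_iff₀ h0, le_div_iff₀ h0]
    constructor <;> rintro ⟨h1, h2⟩ <;> constructor <;> linarith
  · intro k _ hki
    rw [term_zero b hb ν hZ k, mul_zero]
    intro z hz
    rcases lt_or_gt_of_ne hki with h | h
    · left; exact hz.2.trans (hy.trans (hb.antitone h))
    · right; exact (hb.antitone h).trans (hx.trans hz.1)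
  · intro h; simp at h; omega

/-- scaling for a bound -/
lemma scale_aux {a d K s : ℝ} (ha : 0 < a) (hd : 0 ≤ d) {v : ℝ}
    (hv : v ≤ K * (d / a) ^ s) : a ^ s * v ≤ K * d ^ s := by
  calc a ^ s * v ≤ a ^ s * (K * (d / a) ^ s) := by gcongr
    _ = K * (a ^ s * (d / a) ^ s) := by ring
    _ = K * d ^ s := by
      rw [← Real.mul_rpow ha.le (by positivity)]; congr 2; field_simp

structure Good (s K K' : ℝ) (ν : Measure ℝ) : Prop where
  prob : IsProbabilityMeasure ν
  Z : ν (Ioo (0:ℝ) 1)ᶜ = 0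
  A : ∀ t, 0 ≤ t → t ≤ 1 → ν.real (Icc 0 t) ≤ K * t ^ s
  B : ∀ t, 0 ≤ t → t ≤ 1 → ν.real (Icc t 1) ≤ K * (1 - t) ^ s
  C : ∀ x y, 0 ≤ x → x ≤ y → y ≤ 1 → ν.real (Icc x y) ≤ K' * (y - x) ^ s

lemma exists_idx (b : ℕ → ℝ) (n : ℕ) {y : ℝ} (hy : b n < y) (hy1 : y ≤ b 0) :
    ∃ i, i < n ∧ b (i + 1) < y ∧ y ≤ b i := by
  induction n with
  | zero => linarith
  | succ n ih =>
    by_cases h : b n < y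
    · obtain ⟨i, h1, h2⟩ := ih h; exact ⟨i, by omega, h2⟩
    · exact ⟨n, by omega, hy, not_lt.1 h⟩

lemma exists_idx' (b : ℕ → ℝ) (n : ℕ) {y : ℝ} (hy : b n ≤ y) (hy1 : y < b 0) :
    ∃ i, i < n ∧ b (i + 1) ≤ y ∧ y < b i := by
  induction n with
  | zero => linarith
  | succ n ih =>
    by_cases h : b n ≤ y
    · obtain ⟨i, h1, h2⟩ := ih h; exact ⟨i, by omega, h2⟩
    · exact ⟨n, by omega, hy, not_le.1 h⟩

section step
variable (b : ℕ → ℝ) (hb : StrictAnti b) (hpos : ∀ k, 0 < b k) (hb0 : b 0 = 1) (n : ℕ) {s : ℝ}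
  (hs0 : 0 < s) (hs1 : s ≤ 1) {K K' : ℝ} (hK : 1 ≤ K) (ν : Measure ℝ)
  (hν : Good s K K' ν)
include hb hν

lemma L1 {i : ℕ} (hi : i < n) {y : ℝ} (hy : b (i+1) ≤ y) (hy' : y ≤ b i) :
    (Tm b n s ν).real (Icc (b (i+1)) y) ≤ K * (y - b (i+1)) ^ s := by
  have := hν.prob
  have h0 : 0 < b i - b (i + 1) := sub_pos.2 (hb (Nat.lt_succ_self i))
  rw [Tm_single b hb n ν hν.Z hi le_rfl hy']
  apply scale_aux h0 (by linarith)
  rw [div_self h0.ne']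
  refine (hν.B _ (div_nonneg (by linarith) h0.le) ?_).trans_eq ?_
  · rw [div_le_one h0]; linarith
  · congr 2; field_simp; ring

lemma L1' {i : ℕ} (hi : i < n) {x : ℝ} (hx : b (i+1) ≤ x) (hx' : x ≤ b i) :
    (Tm b n s ν).real (Icc x (b i)) ≤ K * (b i - x) ^ s := by
  have := hν.prob
  have h0 : 0 < b i - b (i + 1) := sub_pos.2 (hb (Nat.lt_succ_self i))
  rw [Tm_single b hb n ν hν.Z hi hx le_rfl]
  apply scale_aux h0 (by linarith)
  rw [sub_self, zero_div]
  refine (hν.A _ (div_nonneg (by linarith) h0.le) ?_)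
  · rw [div_le_one h0]; linarith

include hs0 hs1 hK hb0 hpos

lemma Tfin : IsFiniteMeasure (Tm b n s ν) := by
  have := hν.prob
  refine ⟨?_⟩
  rw [Tm_apply b n s ν MeasurableSet.univ]
  exact ENNReal.sum_lt_top.2 fun k _ => ENNReal.mul_lt_top ENNReal.ofReal_lt_top (measure_lt_top _ _)

lemma real_split (x y z : ℝ) : (Tm b n s ν).real (Icc x z) ≤
    (Tm b n s ν).real (Icc x y) + (Tm b n s ν).real (Icc y z) := by
  have := Tfin b hb hpos hb0 n hs0 hs1 hK ν hν
  exact (measureReal_mono (Icc_subset_Icc_union_Icc)).trans (measureReal_union_le _ _)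

/-- the left part -/
lemma L2 (i : ℕ) (hi : i ≤ n) {x : ℝ} (hx : x < b i) :
    (Tm b n s ν).real (Icc x (b i)) ≤ (n:ℝ) ^ (1 - s) * (b i - x) ^ s ∨
    ∃ j, i ≤ j ∧ j < n ∧ b (j+1) ≤ x ∧ x < b j ∧
      (Tm b n s ν).real (Icc x (b i)) ≤ (n:ℝ) ^ (1 - s) * (b i - b j) ^ s + K * (b j - x) ^ s := by
  have := hν.prob
  by_cases h : x < b n
  · left
    refine (Tm_block b hb n hs0 hs1 ν hν.Z hi le_rfl (Or.inr rfl)).trans ?_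
    have := hb.antitone hi
    gcongr
  · right
    push Not at h
    obtain ⟨j, h1, h2, h3⟩ := exists_idx' b n h (hx.trans_le (hb.antitone (Nat.zero_le i)))
    have hij : i ≤ j := by
      by_contra hc
      have := hb.antitone (show j + 1 ≤ i by omega)
      linarith
    refine ⟨j, hij, h1, h2, h3, ?_⟩
    have a1 := real_split b hb hpos hb0 n hs0 hs1 hK ν hν x (b j) (b i)
    have a2 := L1' b hb n ν hν h1 h2 h3.le
    have a3 := Tm_block b hb n hs0 hs1 ν hν.Z hij h1.le (x := b j) (Or.inl le_rfl)
    linarith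

lemma step (hn : 1 ≤ n) (hmor : ∑ k ∈ Finset.range n, (b k - b (k+1)) ^ s = 1)
    {M th : ℝ} (hM : 0 ≤ M) 
    (hM1 : ∀ k, b k - b (k+1) ≤ M * b (k+1))
    (hM2 : b 1 ≤ M * (1 - b 1))
    (hth : (M / (1 + M)) ^ s ≤ th)
    (hKN : 2 ^ (1 - s) + ((n:ℝ) ^ (1 - s) - 1) + (K - 1) * th ≤ K)
    (hNK : (n:ℝ) ^ (1 - s) ≤ K) (hK' : K' = 3 ^ (1 - s) * K) :
    Good s K K' (Tm b n s ν) := by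
  have hp := hν.prob
  have hfin := Tfin b hb hpos hb0 n hs0 hs1 hK ν hν
  have h0 : ∀ k, 0 < b k - b (k + 1) := fun k => sub_pos.2 (hb (Nat.lt_succ_self k))
  have hN1 : 1 ≤ (n:ℝ) ^ (1 - s) := Real.one_le_rpow (by exact_mod_cast hn) (by linarith)
  have hb1 : ∀ k, b k ≤ 1 := fun k => hb0 ▸ hb.antitone (Nat.zero_le k)
  have hzero : ∀ x, (Tm b n s ν).real (Icc x (b n)) = 0 := by
    intro x
    have := Tm_block b hb n hs0 hs1 ν hν.Z le_rfl le_rfl (x := x) (Or.inr rfl)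
    rw [sub_self, Real.zero_rpow hs0.ne', mul_zero] at this
    exact le_antisymm this measureReal_nonneg
  have hzero' : ∀ x y, y ≤ b n → (Tm b n s ν).real (Icc x y) = 0 := by
    intro x y hy
    refine le_antisymm ?_ measureReal_nonneg
    rw [← hzero x]
    exact measureReal_mono (Icc_subset_Icc le_rfl hy)
  have hL2 := L2 b hb hpos hb0 n hs0 hs1 hK ν hν
  have hL1 := fun i hi y hy hy' => L1 b hb n ν hν (i := i) hi (y := y) hy hy'
  have hsplit := real_split b hb hpos hb0 n hs0 hs1 hK ν hν
  have hrp : ∀ z : ℝ, 0 ≤ z → 0 ≤ z ^ s := fun z hz => Real.rpow_nonneg hz s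
  refine ⟨?_, ?_, ?_, ?_, ?_⟩
  · refine ⟨?_⟩
    have := Tm_real b hb n s ν MeasurableSet.univ
    simp only [preimage_univ, probReal_univ, mul_one, hmor] at this
    rw [measureReal_def] at this
    rw [← ENNReal.ofReal_toReal (measure_ne_top (Tm b n s ν) univ), this, ENNReal.ofReal_one]
  · rw [Tm_apply b n s ν measurableSet_Ioo.compl]
    apply Finset.sum_eq_zero
    intro k _
    rw [measure_mono_null _ hν.Z, mul_zero]
    intro x hx hx'
    have := gAff_mem b hb k hx'
    exact hx ⟨(hpos _).trans this.1, this.2.trans_le (hb1 k)⟩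
  · intro t ht0 ht1
    by_cases ht : t ≤ b n
    · rw [hzero' _ _ ht]; have := hrp t ht0; nlinarith
    push Not at ht
    obtain ⟨i, hi, h1, h2⟩ := exists_idx b n ht (by rwa [hb0])
    have a1 := hsplit 0 (b (i+1)) t
    have a2 := hL1 i hi t h1.le h2
    have a3 := Tm_block b hb n hs0 hs1 ν hν.Z (i := i+1) hi le_rfl (x := 0) (Or.inr rfl)
    have a4 : (b (i+1) - b n) ^ s ≤ b (i+1) ^ s := by
      have := hb.antitone (show i+1 ≤ n from hi)
      have := hpos n
      gcongr <;> linarith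
    have a5 := contr hs0 hs1 hM hN1 hK hth hKN (p := b (i+1)) (q := t - b (i+1)) (hpos _).le
      (by linarith) (by linarith [hM1 i])
    rw [add_sub_cancel] at a5
    have a6 := mul_le_mul_of_nonneg_left a4 (by linarith : 0 ≤ (n:ℝ) ^ (1 - s))
    linarith
  · intro t ht0 ht1
    rcases ht1.eq_or_lt with rfl | ht1
    · have a3 := Tm_block b hb n hs0 hs1 ν hν.Z (i := 0) le_rfl (Nat.zero_le n) (x := 1)
        (Or.inl hb0.le)
      rw [hb0, sub_self, Real.zero_rpow hs0.ne', mul_zero] at a3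
      rw [sub_self, Real.zero_rpow hs0.ne', mul_zero]
      exact a3
    rcases hL2 0 (Nat.zero_le n) (x := t) (by rwa [hb0]) with h | ⟨j, -, hj, h1, h2, h3⟩
    · rw [hb0] at h
      exact h.trans (mul_le_mul_of_nonneg_right hNK (hrp _ (by linarith)))
    · rw [hb0] at h3
      rcases Nat.eq_zero_or_pos j with rfl | hjp
      · rw [hb0, sub_self, Real.zero_rpow hs0.ne', mul_zero, zero_add] at h3
        exact h3
      · have c1 : b j ≤ b 1 := hb.antitone hjp
        have c2 := hb1 1
        have c3 := hpos (j+1)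
        have a5 := contr hs0 hs1 hM hN1 hK hth hKN (p := 1 - b j) (q := b j - t)
          (by linarith) (by linarith) (by nlinarith)
        have : 1 - b j + (b j - t) = 1 - t := by ring
        rw [this] at a5
        linarith
  · intro x y hx hxy hy
    have h3K : K ≤ K' := by
      rw [hK']
      have : (1:ℝ) ≤ 3 ^ (1 - s) := Real.one_le_rpow (by norm_num) (by linarith)
      nlinarith
    by_cases hyn : y ≤ b n
    · rw [hzero' _ _ hyn]; exact mul_nonneg (by linarith) (hrp _ (by linarith))
    push Not at hyn
    obtain ⟨i, hi, h1, h2⟩ := exists_idx b n hyn (by rwa [hb0])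
    by_cases hxi : b (i+1) ≤ x
    · rw [Tm_single b hb n ν hν.Z hi hxi h2]
      apply scale_aux (h0 i) (by linarith)
      refine (hν.C _ _ (div_nonneg (by linarith) (h0 i).le) ?_ ?_).trans_eq ?_
      · have := h0 i
        gcongr
      · rw [div_le_one (h0 i)]; linarith
      · congr 2; rw [← sub_div]; congr 1; ring
    push Not at hxi
    have a1 := hsplit x (b (i+1)) y
    have a2 := hL1 i hi y h1.le h2
    have key : ∀ p q r : ℝ, 0 ≤ p → 0 ≤ q → 0 ≤ r → p + q + r = y - x →
        (n:ℝ) ^ (1 - s) * p ^ s + K * q ^ s + K * r ^ s ≤ K' * (y - x) ^ s := by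
      intro p q r hp hq hr h
      have e1 := three_sum hs0 hs1 hp hq hr
      have e2 := mul_le_mul_of_nonneg_right hNK (hrp p hp)
      have e3 := mul_le_mul_of_nonneg_left e1 (by linarith : 0 ≤ K)
      rw [h] at e3
      rw [hK']
      linarith
    rcases hL2 (i+1) hi hxi with h | ⟨j, hij, hj, h3, h4, h5⟩
    · have := key (b (i+1) - x) 0 (y - b (i+1)) (by linarith) le_rfl (by linarith) (by ring)
      rw [Real.zero_rpow hs0.ne'] at this
      linarith
    · have := hb.antitone hij
      have := key (b (i+1) - b j) (b j - x) (y - b (i+1)) (by linarith) (by linarith)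
        (by linarith) (by ring)
      linarith

end step

lemma base_good {s K K' : ℝ} (hs0 : 0 < s) (hs1 : s ≤ 1) (hK : 1 ≤ K) (hK' : 1 ≤ K') :
    Good s K K' (volume.restrict (Icc (0:ℝ) 1)) := by
  have hC : ∀ x y : ℝ, 0 ≤ x → x ≤ y → y ≤ 1 →
      (volume.restrict (Icc (0:ℝ) 1)).real (Icc x y) ≤ (y - x) ^ s := by
    intro x y hx hxy hy
    rw [measureReal_def, Measure.restrict_apply measurableSet_Icc,
      inter_eq_left.2 (Icc_subset_Icc hx hy), Real.volume_Icc, ENNReal.toReal_ofReal (by linarith)]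
    exact Real.self_le_rpow_of_le_one (by linarith) (by linarith) hs1
  have hr : ∀ z : ℝ, 0 ≤ z → 0 ≤ z ^ s := fun z hz => Real.rpow_nonneg hz s
  refine ⟨?_, ?_, ?_, ?_, ?_⟩
  · refine ⟨?_⟩
    simp
  · rw [Measure.restrict_apply measurableSet_Ioo.compl]
    refine measure_mono_null (t := {0, 1}) ?_ ?_
    · rintro x ⟨h1, h2, h3⟩
      simp only [mem_compl_iff, mem_Ioo, not_and, not_lt] at h1
      rcases h2.eq_or_lt with h | h
      · left; exact h.symm
      · right; exact le_antisymm h3 (h1 h)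
    · exact (Set.toFinite _).measure_zero _
  · intro t h0 h1
    have := hC 0 t le_rfl h0 h1
    rw [sub_zero] at this
    nlinarith [hr t h0]
  · intro t h0 h1
    have := hC t 1 h0 h1 le_rfl
    nlinarith [hr (1 - t) (by linarith)]
  · intro x y h0 h1 h2
    have := hC x y h0 h1 h2
    nlinarith [hr (y - x) (by linarith)]

def muA (b : ℕ → ℝ) (n : ℕ) (s : ℝ) : ℕ → Measure ℝ
  | 0 => volume.restrict (Icc (0:ℝ) 1)
  | m + 1 => Tm b n s (muA b n s m)

def XA (b : ℕ → ℝ) (n : ℕ) : ℕ → Set ℝ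
  | 0 => Icc (0:ℝ) 1
  | m + 1 => ⋃ k ∈ Finset.range n, gAff b (k + 1) '' XA b n m

lemma XA_compact (b : ℕ → ℝ) (n m : ℕ) : IsCompact (XA b n m) := by
  induction m with
  | zero => exact isCompact_Icc
  | succ m ih =>
    exact (Finset.range n).isCompact_biUnion fun k _ => ih.image (gAff_cont b _)

lemma gAff_mapsTo (b : ℕ → ℝ) (hb : StrictAnti b) (hpos : ∀ k, 0 < b k) (hb0 : b 0 = 1) (k : ℕ)
    {x : ℝ} (hx : x ∈ Icc (0:ℝ) 1) : gAff b (k+1) x ∈ Icc (0:ℝ) 1 := by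
  have h0 : 0 < b k - b (k + 1) := sub_pos.2 (hb (Nat.lt_succ_self k))
  have h1 : b k ≤ 1 := hb0 ▸ hb.antitone (Nat.zero_le k)
  have h2 := hpos (k+1)
  rw [gAff_succ]
  constructor <;> nlinarith [hx.1, hx.2]

lemma XA_anti (b : ℕ → ℝ) (hb : StrictAnti b) (hpos : ∀ k, 0 < b k) (hb0 : b 0 = 1) (n : ℕ) :
    Antitone (XA b n) := by
  apply antitone_nat_of_succ_le
  intro m
  induction m with
  | zero =>
    intro x hx
    simp only [XA, mem_iUnion, mem_image] at hx
    obtain ⟨k, _, y, hy, rfl⟩ := hx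
    exact gAff_mapsTo b hb hpos hb0 k hy
  | succ m ih =>
    exact iUnion₂_mono fun k _ => image_mono ih

lemma words_eq (b : ℕ → ℝ) (n m : ℕ) :
    (⋃ w ∈ {w : List ℕ | w.length = m ∧ ∀ i ∈ w, 1 ≤ i ∧ i ≤ n},
      wordComp (gAff b) w '' Set.Icc (0 : ℝ) 1) = XA b n m := by
  induction m with
  | zero =>
    ext x
    simp only [mem_ofPred_eq, mem_iUnion, XA]
    constructor
    · rintro ⟨w, ⟨hw, -⟩, hx⟩
      rw [List.length_eq_zero_iff] at hw
      subst hw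
      simpa [wordComp] using hx
    · intro hx
      exact ⟨[], by simp, by simpa [wordComp] using hx⟩
  | succ m ih =>
    ext x
    simp only [XA, ← ih, mem_ofPred_eq, mem_iUnion, mem_image, Finset.mem_range]
    constructor
    · rintro ⟨w, ⟨hw, hi⟩, z, hz, rfl⟩
      match w, hw, hi with
      | k :: w, hw, hi =>
        have hk := hi k (by simp)
        obtain ⟨k, rfl⟩ : ∃ k', k = k' + 1 := ⟨k - 1, by omega⟩
        exact ⟨k, by omega, wordComp (gAff b) w z,
          ⟨w, ⟨by simpa using hw, fun i h => hi i (by simp [h])⟩, z, hz, rfl⟩, rfl⟩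
    · rintro ⟨k, hk, y, ⟨w, ⟨hw, hi⟩, z, hz, rfl⟩, rfl⟩
      refine ⟨(k+1) :: w, ⟨by simp [hw], ?_⟩, z, hz, rfl⟩
      intro i h
      rcases List.mem_cons.1 h with rfl | h
      · omega
      · exact hi i h

lemma limitSet_eq (b : ℕ → ℝ) (n : ℕ) : limitSet (gAff b) n = ⋂ m, XA b n (m + 1) := by
  unfold limitSet
  exact iInter_congr fun m => words_eq b n (m + 1)

lemma muA_supp (b : ℕ → ℝ) (n : ℕ) (s : ℝ) (m : ℕ) : muA b n s m (XA b n m)ᶜ = 0 := by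
  induction m with
  | zero =>
    simp only [muA, XA]
    rw [Measure.restrict_apply measurableSet_Icc.compl]; simp
  | succ m ih =>
    rw [muA, Tm_apply b n s _ (XA_compact b n (m+1)).measurableSet.compl]
    apply Finset.sum_eq_zero
    intro k hk
    rw [measure_mono_null _ ih, mul_zero]
    intro x hx hx'
    apply hx
    simp only [XA, mem_iUnion]
    exact ⟨k, hk, x, hx', rfl⟩

lemma Good.C' {s K K' : ℝ} (hs0 : 0 < s) (hK' : 0 ≤ K') {ν : Measure ℝ} (hν : Good s K K' ν)
    (x y : ℝ) (hxy : x ≤ y) : ν (Icc x y) ≤ ENNReal.ofReal (K' * (y - x) ^ s) := by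
  have := hν.prob
  have h1 : ν (Icc x y) ≤ ν (Icc (max 0 x) (min 1 y)) := by
    have e : Icc x y ⊆ Icc (max 0 x) (min 1 y) ∪ (Ioo 0 1)ᶜ := by
      intro z hz
      by_cases hz' : z ∈ Ioo (0:ℝ) 1
      · left; exact ⟨max_le hz'.1.le hz.1, le_min hz'.2.le hz.2⟩
      · right; exact hz'
    refine (measure_mono e).trans ((measure_union_le _ _).trans ?_)
    rw [hν.Z, add_zero]
  refine h1.trans ?_
  by_cases hc : max 0 x ≤ min 1 y
  · have h2 := hν.C _ _ (le_max_left 0 x) hc (min_le_left 1 y)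
    rw [← ENNReal.ofReal_toReal (measure_ne_top ν _)]
    apply ENNReal.ofReal_le_ofReal
    refine h2.trans ?_
    have h3 : 0 ≤ min 1 y - max 0 x := by linarith
    have h4 : min 1 y - max 0 x ≤ y - x := by
      linarith [min_le_right 1 y, le_max_right 0 x]
    gcongr
  · rw [Icc_eq_empty hc]; simp

/-- enlarging a set to an open one -/
lemma enlarge {s K K' : ℝ} (hs0 : 0 < s) (hK' : 0 ≤ K') {ι : Type*} (ν : ι → Measure ℝ)
    (hν : ∀ m, Good s K K' (ν m)) (t : Set ℝ) (ht : Metric.ediam t ≤ 1) (ε : NNReal) (hε : 0 < ε) :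
    ∃ U, IsOpen U ∧ t ⊆ U ∧ ∀ m, ν m U ≤
      ENNReal.ofReal K' * ((⨆ _ : t.Nonempty, Metric.ediam t ^ s) + ε) := by
  rcases t.eq_empty_or_nonempty with rfl | hne
  · exact ⟨∅, isOpen_empty, le_rfl, fun m => by simp⟩
  have hbd : Bornology.IsBounded t :=
    Metric.isBounded_iff_ediam_ne_top.2 (ht.trans_lt ENNReal.one_lt_top).ne
  rw [iSup_pos hne]
  set D := Metric.diam t with hD
  have hD0 : 0 ≤ D := Metric.diam_nonneg
  have hDe : Metric.ediam t = ENNReal.ofReal D := by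
    rw [hD, Metric.diam, ENNReal.ofReal_toReal]
    exact (ht.trans_lt ENNReal.one_lt_top).ne
  have hcont : Continuous fun δ : ℝ => (D + 2 * δ) ^ s :=
    (Real.continuous_rpow_const hs0.le).comp (by fun_prop)
  have hev : ∀ᶠ δ in 𝓝[>] (0:ℝ), (D + 2 * δ) ^ s < D ^ s + ε := by
    have h1 : Tendsto (fun δ : ℝ => (D + 2 * δ) ^ s) (𝓝[>] 0) (𝓝 ((D + 2 * 0) ^ s)) :=
      (hcont.tendsto 0).mono_left nhdsWithin_le_nhds
    rw [mul_zero, add_zero] at h1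
    exact h1.eventually_lt_const (by linarith [NNReal.coe_pos.2 hε])
  obtain ⟨δ, h1, h2⟩ := (hev.and self_mem_nhdsWithin).exists
  have hδ : 0 < δ := h2
  have hDs : sSup t - sInf t = D := by rw [hD, Real.diam_eq hbd]
  refine ⟨Ioo (sInf t - δ) (sSup t + δ), isOpen_Ioo, ?_, ?_⟩
  · intro x hx
    have := csInf_le hbd.bddBelow hx
    have := le_csSup hbd.bddAbove hx
    constructor <;> linarith
  · intro m
    refine (measure_mono Ioo_subset_Icc_self).trans
      (((hν m).C' hs0 hK' _ _ (by linarith)).trans ?_)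
    rw [hDe, ENNReal.ofReal_rpow_of_nonneg hD0 hs0.le, ENNReal.ofReal_mul hK']
    gcongr
    rw [← ENNReal.ofReal_coe_nnreal, ← ENNReal.ofReal_add (Real.rpow_nonneg hD0 s) ε.coe_nonneg]
    apply ENNReal.ofReal_le_ofReal
    refine le_trans (le_of_eq ?_) h1.le
    congr 1; linarith

lemma lower (b : ℕ → ℝ) (hb : StrictAnti b) (hpos : ∀ k, 0 < b k) (hb0 : b 0 = 1) (n : ℕ)
    {s K K' : ℝ} (hs0 : 0 < s) (hK0 : 0 < K') (hν : ∀ m, Good s K K' (muA b n s m)) :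
    1 ≤ ENNReal.ofReal K' * μH[s] (limitSet (gAff b) n) := by
  have hK' := hK0.le
  have hne : ENNReal.ofReal K' ≠ 0 := (ENNReal.ofReal_pos.2 hK0).ne'
  suffices H : ∀ t : ℕ → Set ℝ, limitSet (gAff b) n ⊆ ⋃ i, t i → (∀ i, Metric.ediam (t i) ≤ 1) →
      1 ≤ ENNReal.ofReal K' * ∑' i, ⨆ _ : (t i).Nonempty, Metric.ediam (t i) ^ s by
    rw [mul_comm, ← ENNReal.div_le_iff_le_mul (Or.inl hne) (Or.inl ENNReal.ofReal_ne_top),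
      Measure.hausdorffMeasure_apply]
    refine le_trans ?_ (le_iSup₂ (1 : ENNReal) one_pos)
    refine le_iInf fun t => le_iInf fun h1 => le_iInf fun h2 => ?_
    rw [ENNReal.div_le_iff_le_mul (Or.inl hne) (Or.inl ENNReal.ofReal_ne_top), mul_comm]
    exact H t h1 h2
  intro t h1 h2
  have key : ∀ ε : ENNReal, ε ≠ 0 → 1 ≤ ENNReal.ofReal K' *
      ((∑' i, ⨆ _ : (t i).Nonempty, Metric.ediam (t i) ^ s) + ε) := by
    intro ε hε
    obtain ⟨e, he0, he⟩ := ENNReal.exists_pos_sum_of_countable hε ℕ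
    choose U hU1 hU2 hU3 using fun i => enlarge hs0 hK' (muA b n s) hν (t i) (h2 i) (e i) (he0 i)
    obtain ⟨m, hm⟩ : ∃ m, XA b n (m + 1) ⊆ ⋃ i, U i := by
      apply exists_subset_nhds_of_isCompact
      · apply directed_of_isDirected_le
        intro i j hij
        exact XA_anti b hb hpos hb0 n (by omega)
      · intro m; exact XA_compact b n _
      · intro x hx
        rw [← limitSet_eq] at hx
        exact (isOpen_iUnion hU1).mem_nhds (iUnion_mono hU2 (h1 hx))
    have := (hν (m+1)).prob
    calc (1 : ENNReal) = muA b n s (m+1) (XA b n (m+1)) := by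
          exact ((prob_compl_eq_zero_iff (XA_compact b n _).measurableSet).1 (muA_supp b n s _)).symm
      _ ≤ muA b n s (m+1) (⋃ i, U i) := measure_mono hm
      _ ≤ ∑' i, muA b n s (m+1) (U i) := measure_iUnion_le _
      _ ≤ ∑' i, ENNReal.ofReal K' * ((⨆ _ : (t i).Nonempty, Metric.ediam (t i) ^ s) + e i) :=
          ENNReal.tsum_le_tsum fun i => hU3 i _
      _ = ENNReal.ofReal K' * ((∑' i, ⨆ _ : (t i).Nonempty, Metric.ediam (t i) ^ s)
            + ∑' i, (e i : ENNReal)) := by rw [ENNReal.tsum_mul_left, ENNReal.tsum_add]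
      _ ≤ _ := by gcongr
  by_contra hcon
  push Not at hcon
  set S := ∑' i, ⨆ _ : (t i).Nonempty, Metric.ediam (t i) ^ s
  set k := ENNReal.ofReal K'
  have hk : k ≠ ⊤ := ENNReal.ofReal_ne_top
  have hg : 1 - k * S ≠ 0 := (tsub_pos_of_lt hcon).ne'
  have h3 : (1 - k * S) / 2 / k ≠ 0 := by
    simp only [ne_eq, ENNReal.div_eq_zero_iff, hk, hg, or_false]; simp
  have h4 := key _ h3
  rw [mul_add, ENNReal.mul_div_cancel hne hk] at h4
  have h5 : k * S + (1 - k * S) / 2 < k * S + (1 - k * S) := by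
    apply ENNReal.add_lt_add_left hcon.ne_top
    exact ENNReal.half_lt_self hg (by simp)
  rw [add_tsub_cancel_of_le hcon.le] at h5
  exact absurd h4 (not_le.2 h5)

def aprod (b : ℕ → ℝ) (w : List ℕ) : ℝ := (w.map fun k => b (k - 1) - b k).prod

lemma wordComp_sub (b : ℕ → ℝ) (hb : StrictAnti b) (w : List ℕ) (x y : ℝ) :
    |wordComp (gAff b) w x - wordComp (gAff b) w y| = aprod b w * |x - y| := by
  induction w with
  | nil => simp [wordComp, aprod]
  | cons k w ih =>
    have h0 : 0 ≤ b (k - 1) - b k := sub_nonneg.2 (hb.antitone (Nat.sub_le k 1))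
    simp only [wordComp, Function.comp, aprod, List.map_cons, List.prod_cons] at ih ⊢
    rw [mul_assoc, ← ih, ← abs_of_nonneg h0, ← abs_mul, ← abs_neg]
    congr 1
    simp only [gAff]; ring

lemma upper (b : ℕ → ℝ) (hb : StrictAnti b) (hpos : ∀ k, 0 < b k) (hb0 : b 0 = 1) (n : ℕ)
    {s : ℝ} (hs0 : 0 < s) (hmor : ∑ k ∈ Finset.range n, (b k - b (k+1)) ^ s = 1) :
    μH[s] (limitSet (gAff b) n) ≤ 1 := by
  have h0 : ∀ k, 0 ≤ b k - b (k + 1) := fun k => sub_nonneg.2 (hb.antitone (Nat.le_succ k))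
  have hb1 : ∀ k, b k ≤ 1 := fun k => hb0 ▸ hb.antitone (Nat.zero_le k)
  let W : (m : ℕ) → (Fin m → Fin n) → List ℕ := fun m p => List.ofFn fun i => (p i : ℕ) + 1
  have hW : ∀ m p, aprod b (W m p) = ∏ i, (b (p i) - b (p i + 1)) := by
    intro m p
    simp [W, aprod, List.map_ofFn, List.prod_ofFn]
  have hdiam : ∀ m p, Metric.ediam (wordComp (gAff b) (W m p) '' Icc (0:ℝ) 1) ≤
      ENNReal.ofReal (∏ i, (b (p i) - b (p i + 1))) := by
    intro m p
    apply Metric.ediam_le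
    rintro _ ⟨x, hx, rfl⟩ _ ⟨y, hy, rfl⟩
    rw [edist_dist, Real.dist_eq, wordComp_sub b hb, hW]
    apply ENNReal.ofReal_le_ofReal
    apply mul_le_of_le_one_right (Finset.prod_nonneg fun i _ => h0 _)
    rw [abs_le]
    constructor <;> linarith [hx.1, hx.2, hy.1, hy.2]
  have hmain := Measure.hausdorffMeasure_le_liminf_sum (β := ℕ) (ι := fun m => Fin m → Fin n)
    s (limitSet (gAff b) n) (l := atTop) (fun m => ENNReal.ofReal ((1 - b n) ^ m)) ?_
    (fun m p => wordComp (gAff b) (W m p) '' Icc (0:ℝ) 1) ?_ ?_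
  · refine hmain.trans ?_
    refine (liminf_le_liminf (v := fun _ => (1:ENNReal)) (Eventually.of_forall ?_)).trans_eq ?_
    · intro m
      calc ∑ p : Fin m → Fin n, Metric.ediam (wordComp (gAff b) (W m p) '' Icc (0:ℝ) 1) ^ s
          ≤ ∑ p : Fin m → Fin n, ENNReal.ofReal (∏ i, (b (p i) - b (p i + 1)) ^ s) := by
            apply Finset.sum_le_sum
            intro p _
            rw [Real.finsetProd_rpow _ _ (fun i _ => h0 _),
              ← ENNReal.ofReal_rpow_of_nonneg (Finset.prod_nonneg fun i _ => h0 _) hs0.le]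
            exact ENNReal.rpow_le_rpow (hdiam m p) hs0.le
        _ = ENNReal.ofReal (∑ p : Fin m → Fin n, ∏ i, (b (p i) - b (p i + 1)) ^ s) := by
            rw [ENNReal.ofReal_sum_of_nonneg]
            intro p _
            exact Finset.prod_nonneg fun i _ => Real.rpow_nonneg (h0 _) _
        _ = ENNReal.ofReal ((∑ k : Fin n, (b k - b (k + 1)) ^ s) ^ m) := by
            rw [Fintype.sum_pow]
        _ = 1 := by
            rw [Fin.sum_univ_eq_sum_range (fun k => (b k - b (k + 1)) ^ s), hmor]; simp
    · simp
  · rw [← ENNReal.ofReal_zero]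
    apply ENNReal.tendsto_ofReal
    apply tendsto_pow_atTop_nhds_zero_of_lt_one <;> linarith [hb1 n, hpos n]
  · refine Eventually.of_forall fun m p => (hdiam m p).trans ?_
    apply ENNReal.ofReal_le_ofReal
    calc ∏ i, (b (p i) - b (p i + 1)) ≤ ∏ i : Fin m, (1 - b n) := by
          apply Finset.prod_le_prod
          · intro i _; exact h0 _
          · intro i _
            have := hb.antitone (show (p i : ℕ) + 1 ≤ n from (p i).2)
            linarith [hb1 (p i)]
      _ = _ := by simp
  · filter_upwards [eventually_ge_atTop 1] with m hm x hx
    rw [limitSet_eq, mem_iInter] at hx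
    have := hx (m - 1)
    rw [Nat.sub_add_cancel hm, ← words_eq] at this
    simp only [mem_iUnion, mem_ofPred_eq] at this ⊢
    obtain ⟨w, ⟨hw, hi⟩, hxw⟩ := this
    subst hw
    have hlt : ∀ i : Fin w.length, w.get i - 1 < n := fun i => by
      have := hi _ (List.get_mem w i); omega
    refine ⟨fun i => ⟨w.get i - 1, hlt i⟩, ?_⟩
    convert hxw
    simp only [W]
    conv_rhs => rw [← List.ofFn_get w]
    congr 1
    funext i
    have := hi _ (List.get_mem w i)
    show w.get i - 1 + 1 = w.get i
    omega

/-- In the linear setting, under (C1) and (C2), `H_{h_n}(J_n) → 1`. -/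
theorem linear_hausdorff_measure_tendsto_one
    (b : ℕ → ℝ) (h : ℕ → ℝ)
    (hb0 : b 0 = 1) (hbanti : StrictAnti b)
    (hblim : Filter.Tendsto b Filter.atTop (nhds 0))
    (hmoran : ∀ n, 1 ≤ n → ∑ k ∈ Finset.Icc 1 n, (b (k - 1) - b k) ^ h n = 1)
    (hdimH : ∀ n, 1 ≤ n → dimH (limitSet (gAff b) n) = ENNReal.ofReal (h n))
    (hC1 : Filter.Tendsto (fun n : ℕ => (1 - h n) * Real.log n) Filter.atTop (nhds 0))
    (hC2 : ∃ M : ℝ, ∀ k : ℕ, (b k - b (k + 1)) / b (k + 1) ≤ M) :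
    Filter.Tendsto (fun n : ℕ => μH[h n] (limitSet (gAff b) n)) Filter.atTop (nhds 1) := by
  have hnn : ∀ k, 0 ≤ b k := fun k => hbanti.antitone.le_of_tendsto hblim k
  have hpos : ∀ k, 0 < b k := fun k => (hnn (k+1)).trans_lt (hbanti (Nat.lt_succ_self k))
  have hapos : ∀ k, 0 < b k - b (k + 1) := fun k => sub_pos.2 (hbanti (Nat.lt_succ_self k))
  have hb1 : ∀ k, b k ≤ 1 := fun k => hb0 ▸ hbanti.antitone (Nat.zero_le k)
  have hmor : ∀ n, 1 ≤ n → ∑ k ∈ Finset.range n, (b k - b (k + 1)) ^ h n = 1 := by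
    intro n hn
    have h1 := Finset.sum_Ico_add' (fun k => (b (k - 1) - b k) ^ h n) 0 n 1
    simp only [Nat.add_sub_cancel] at h1
    rw [← hmoran n hn, Finset.range_eq_Ico, h1]
    apply Finset.sum_congr _ (fun _ _ => rfl)
    ext k; simp
  have hlt1 : ∀ n, 1 ≤ n → h n ≤ 1 := by
    intro n hn
    by_contra hc
    push Not at hc
    have h1 : ∑ k ∈ Finset.range n, (b k - b (k + 1)) ^ h n
        ≤ ∑ k ∈ Finset.range n, (b k - b (k + 1)) := by
      apply Finset.sum_le_sum
      intro k _
      exact Real.rpow_le_self_of_le_one (hapos k).le (by linarith [hb1 k, hpos (k+1)]) hc.le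
    rw [hmor n hn, Finset.range_eq_Ico, tele b (Nat.zero_le n), hb0] at h1
    linarith [hpos n]
  obtain ⟨M0, hM0⟩ := hC2
  have hb11 : b 1 < 1 := hb0 ▸ hbanti Nat.zero_lt_one
  obtain ⟨M, hM1, hMa, hMb⟩ : ∃ M : ℝ, 1 ≤ M ∧ (∀ k, b k - b (k+1) ≤ M * b (k+1)) ∧
      b 1 ≤ M * (1 - b 1) := by
    refine ⟨max 1 (max M0 (b 1 / (1 - b 1))), le_max_left _ _, ?_, ?_⟩
    · intro k
      rw [← div_le_iff₀ (hpos _)]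
      exact (hM0 k).trans ((le_max_left _ _).trans (le_max_right _ _))
    · rw [← div_le_iff₀ (by linarith)]
      exact (le_max_right _ _).trans (le_max_right _ _)
  have hρ0 : 0 < M / (1 + M) := by positivity
  have hρ1 : M / (1 + M) < 1 := by rw [div_lt_one (by linarith)]; linarith
  obtain ⟨th, hth⟩ : ∃ th, th = (M / (1 + M)) ^ (1/2 : ℝ) := ⟨_, rfl⟩
  have hth0 : 0 ≤ th := by rw [hth]; positivity
  have hth1 : th < 1 := by rw [hth]; exact Real.rpow_lt_one hρ0.le hρ1 (by norm_num)
  have hlog : Tendsto (fun n : ℕ => Real.log n) atTop atTop :=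
    Real.tendsto_log_atTop.comp tendsto_natCast_atTop_atTop
  have hd : Tendsto (fun n => 1 - h n) atTop (𝓝 0) := by
    have h1 := hC1.mul (tendsto_inv_atTop_zero.comp hlog)
    rw [mul_zero] at h1
    refine h1.congr' ?_
    filter_upwards [hlog.eventually_gt_atTop 0] with n hn
    simp only [Function.comp]
    field_simp
  have hN : Tendsto (fun n : ℕ => (n:ℝ) ^ (1 - h n)) atTop (𝓝 1) := by
    have h1 := (Real.continuous_exp.tendsto 0).comp hC1
    rw [Real.exp_zero] at h1
    refine h1.congr' ?_
    filter_upwards [eventually_ge_atTop 1] with n hn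
    simp only [Function.comp]
    rw [Real.rpow_def_of_pos (by exact_mod_cast hn), mul_comm]
  have hc : ∀ c : ℝ, 0 < c → Tendsto (fun n : ℕ => c ^ (1 - h n)) atTop (𝓝 1) := by
    intro c hc
    have h1 := (Real.continuous_const_rpow hc.ne').tendsto 0 |>.comp hd
    rw [Real.rpow_zero] at h1
    exact h1
  obtain ⟨K, hK⟩ : ∃ K : ℕ → ℝ, K = fun n : ℕ =>
    1 + ((n:ℝ) ^ (1 - h n) - 1 + ((2:ℝ) ^ (1 - h n) - 1)) / (1 - th) := ⟨_, rfl⟩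
  have hKt : Tendsto K atTop (𝓝 1) := by
    have h1 := ((((hN.sub_const 1).add ((hc 2 two_pos).sub_const 1)).div_const (1 - th)).const_add 1)
    simp only [sub_self, add_zero, zero_div] at h1
    rw [hK]
    exact h1
  have hK't : Tendsto (fun n => (ENNReal.ofReal (3 ^ (1 - h n) * K n))⁻¹) atTop (𝓝 1) := by
    have h1 := ENNReal.tendsto_ofReal ((hc 3 three_pos).mul hKt)
    rw [mul_one, ENNReal.ofReal_one] at h1
    simpa using h1.inv
  have hhalf : ∀ᶠ n in atTop, 1 / 2 < h n := by
    filter_upwards [hd.eventually_lt_const (show (0:ℝ) < 1/2 by norm_num)] with n hn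
    linarith
  refine tendsto_of_tendsto_of_tendsto_of_le_of_le' hK't tendsto_const_nhds ?_ ?_
  · filter_upwards [hhalf, eventually_ge_atTop 1] with n hs hn
    have hs0 : 0 < h n := by linarith
    have hs1 := hlt1 n hn
    have hN1 : 1 ≤ (n:ℝ) ^ (1 - h n) := Real.one_le_rpow (by exact_mod_cast hn) (by linarith)
    have h21 : 1 ≤ (2:ℝ) ^ (1 - h n) := Real.one_le_rpow (by norm_num) (by linarith)
    have h31 : 1 ≤ (3:ℝ) ^ (1 - h n) := Real.one_le_rpow (by norm_num) (by linarith)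
    have hKe : (K n - 1) * (1 - th) = (n:ℝ) ^ (1 - h n) - 1 + ((2:ℝ) ^ (1 - h n) - 1) := by
      have : 1 - th ≠ 0 := by linarith
      rw [hK]; field_simp; ring
    have hK1 : 1 ≤ K n := by
      by_contra hcc
      push Not at hcc
      nlinarith
    have hK'1 : 1 ≤ 3 ^ (1 - h n) * K n := by nlinarith
    have hgood : ∀ m, Good (h n) (K n) (3 ^ (1 - h n) * K n) (muA b n (h n) m) := by
      intro m
      induction m with
      | zero => exact base_good hs0 hs1 hK1 hK'1
      | succ m ih =>
        refine step b hbanti hpos hb0 n hs0 hs1 hK1 _ ih hn (hmor n hn) (M := M) (th := th)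
          (by linarith) hMa hMb ?_ (by linarith) (by nlinarith) rfl
        rw [hth]
        exact Real.rpow_le_rpow_of_exponent_ge hρ0 hρ1.le hs.le
    have hl := lower b hbanti hpos hb0 n hs0 (by linarith) hgood
    rw [← one_div]
    exact ENNReal.div_le_of_le_mul' hl
  · filter_upwards [hhalf, eventually_ge_atTop 1] with n hs hn
    exact upper b hbanti hpos hb0 n (by linarith) (hmor n hn)
end
end

section
/- In the linear setting, assume sup_{k≥1} (b_{k−1} − b_k)/b_k < ∞. Then for every ε > 0 there exists l_0 ∈ ℕ such that for every l > l_0, every n ≥ 1, and every interval [a,b] ∈ F_l^n, one has b/a ≤ 1 + ε. -/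
open Set Filter MeasureTheory Topology

noncomputable section

theorem wordComp_contr (b : ℕ → ℝ) (r : ℝ) (hr : 0 ≤ r)
    (hpos : ∀ k, 0 < b k) (hle : ∀ k, b k ≤ 1)
    (ha : ∀ k, 1 ≤ k → 0 ≤ b (k - 1) - b k ∧ b (k - 1) - b k ≤ r) (w : List ℕ) :
    (∀ i ∈ w, 1 ≤ i) → ∀ u ∈ Set.Icc (0 : ℝ) 1, ∀ v ∈ Set.Icc (0 : ℝ) 1,
      wordComp (gAff b) w u ∈ Set.Icc (0 : ℝ) 1 ∧
      |wordComp (gAff b) w u - wordComp (gAff b) w v| ≤ r ^ w.length := by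
  induction w with
  | nil =>
    intro _ u hu v hv
    refine ⟨hu, ?_⟩
    simp only [wordComp, id, List.length_nil, pow_zero]
    rw [abs_le]
    constructor <;> linarith [hu.1, hu.2, hv.1, hv.2]
  | cons k w ih =>
    intro hw u hu v hv
    obtain ⟨⟨h0, h1⟩, h2⟩ := ih (fun i hi => hw i (List.mem_cons_of_mem _ hi)) u hu v hv
    obtain ⟨ha0, ha1⟩ := ha k (hw k List.mem_cons_self)
    simp only [wordComp, Function.comp, List.length_cons]
    generalize wordComp (gAff b) w u = p at *
    generalize wordComp (gAff b) w v = q at *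
    refine ⟨⟨?_, ?_⟩, ?_⟩
    · unfold gAff
      nlinarith [hpos k]
    · unfold gAff
      nlinarith [hle (k - 1)]
    · have : gAff b k p - gAff b k q = -((b (k - 1) - b k) * (p - q)) := by
        unfold gAff; ring
      rw [this, abs_neg, abs_mul, abs_of_nonneg ha0, pow_succ']
      exact mul_le_mul ha1 h2 (abs_nonneg _) hr

/-- In the linear setting, if `sup_{k≥1} (b_{k-1} - b_k)/b_k < ∞`, then for every `ε > 0` there is
    `l₀` such that every interval `[a, b]` of generation `l > l₀` of any `S_n` satisfies
    `b/a ≤ 1 + ε`. -/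
theorem linear_generation_interval_ratio
    (b : ℕ → ℝ)
    (hb0 : b 0 = 1) (hbanti : StrictAnti b)
    (hblim : Filter.Tendsto b Filter.atTop (nhds 0))
    (hsup : ∃ M : ℝ, ∀ k : ℕ, 1 ≤ k → (b (k - 1) - b k) / b k ≤ M) :
    ∀ ε > (0 : ℝ), ∃ l₀ : ℕ, ∀ l > l₀, ∀ n : ℕ, 1 ≤ n → ∀ x y : ℝ,
      (∃ w : List ℕ, w.length = l ∧ (∀ i ∈ w, 1 ≤ i ∧ i ≤ n) ∧
        Set.Icc x y = wordComp (gAff b) w '' Set.Icc (0 : ℝ) 1) →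
      y / x ≤ 1 + ε := by
  have hpos : ∀ k, 0 < b k := fun k =>
    lt_of_le_of_lt (hbanti.antitone.le_of_tendsto hblim (k + 1)) (hbanti (Nat.lt_succ_self k))
  have hle : ∀ k, b k ≤ 1 := fun k => hb0 ▸ hbanti.antitone (Nat.zero_le k)
  have hb1 : b 1 < 1 := hb0 ▸ hbanti Nat.zero_lt_one
  obtain ⟨M, hM⟩ := hsup
  have hM0 : 0 ≤ M := by
    refine le_trans ?_ (hM 1 le_rfl)
    simp only [Nat.sub_self, hb0]
    exact div_nonneg (by linarith) (hpos 1).le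
  set r := max (1 - b 1) (b 1) with hrdef
  have hr0 : 0 ≤ r := le_trans (hpos 1).le (le_max_right _ _)
  have hr1 : r < 1 := max_lt (by linarith [hpos 1]) hb1
  have ha : ∀ k, 1 ≤ k → 0 ≤ b (k - 1) - b k ∧ b (k - 1) - b k ≤ r := by
    intro k hk
    refine ⟨sub_nonneg.2 (hbanti.antitone (Nat.sub_le k 1)), ?_⟩
    rcases Nat.eq_or_lt_of_le hk with h | h
    · subst h
      simp only [Nat.sub_self, hb0]
      exact le_max_left _ _
    · have h3 : b (k - 1) ≤ b 1 := hbanti.antitone (by omega)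
      exact le_trans (by linarith [hpos k]) (le_max_right _ _)
  intro ε hε
  obtain ⟨N, hN⟩ := exists_pow_lt_of_lt_one (show 0 < ε / (M + 1) by positivity) hr1
  refine ⟨N, ?_⟩
  rintro l hl n - x y ⟨w, hwl, hw, himg⟩
  have hne : (Set.Icc x y).Nonempty := by
    rw [himg]
    exact (Set.nonempty_Icc.2 zero_le_one).image _
  have hxy : x ≤ y := Set.nonempty_Icc.1 hne
  obtain ⟨u, hu, hux⟩ : x ∈ wordComp (gAff b) w '' Set.Icc (0 : ℝ) 1 :=
    himg ▸ Set.left_mem_Icc.2 hxy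
  obtain ⟨v, hv, hvy⟩ : y ∈ wordComp (gAff b) w '' Set.Icc (0 : ℝ) 1 :=
    himg ▸ Set.right_mem_Icc.2 hxy
  cases w with
  | nil => simp at hwl; omega
  | cons k w =>
    have hk : 1 ≤ k := (hw k List.mem_cons_self).1
    obtain ⟨⟨h0, h1⟩, h2⟩ := wordComp_contr b r hr0 hpos hle ha w
      (fun i hi => (hw i (List.mem_cons_of_mem _ hi)).1) u hu v hv
    obtain ⟨ha0, ha1⟩ := ha k hk
    simp only [List.length_cons] at hwl
    have hlen : r ^ w.length ≤ r ^ N := pow_le_pow_of_le_one hr0 hr1.le (by omega)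
    simp only [wordComp, Function.comp] at hux hvy
    generalize wordComp (gAff b) w u = p at *
    generalize wordComp (gAff b) w v = q at *
    have hMk : b (k - 1) - b k ≤ M * b k := (div_le_iff₀ (hpos k)).1 (hM k hk)
    have hxb : b k ≤ x := by
      rw [← hux]; unfold gAff; nlinarith
    have hx0 : 0 < x := lt_of_lt_of_le (hpos k) hxb
    have hpq : p - q ≤ ε / (M + 1) := by linarith [le_abs_self (p - q)]
    have hd : y - x = (b (k - 1) - b k) * (p - q) := by
      rw [← hux, ← hvy]; unfold gAff; ring
    have hε' : 0 ≤ ε / (M + 1) := by positivity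
    have hMe : M * (ε / (M + 1)) ≤ ε := by
      have : (M + 1) * (ε / (M + 1)) = ε := by field_simp
      linarith
    rw [div_le_iff₀ hx0]
    have e1 : y - x ≤ (b (k - 1) - b k) * (ε / (M + 1)) := by
      rw [hd]; exact mul_le_mul_of_nonneg_left hpq ha0
    have e2 : (b (k - 1) - b k) * (ε / (M + 1)) ≤ (M * b k) * (ε / (M + 1)) :=
      mul_le_mul_of_nonneg_right hMk hε'
    have e3 : (M * b k) * (ε / (M + 1)) ≤ ε * b k := by
      nlinarith [mul_le_mul_of_nonneg_right hMe (hpos k).le]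
    have e4 : ε * b k ≤ ε * x := mul_le_mul_of_nonneg_left hxb hε.le
    linarith
end
end

section
/- In the linear setting, assume (C1): lim_{n→∞} (1 − h_n)·ln n = 0. Then limsup_{n→∞} sup{ m_n([b_{p+q}, b_p])/(b_p − b_{p+q})^{h_n} : p ≥ 0, q ≥ 1 } ≤ 1. -/
open Set Filter MeasureTheory Topology

noncomputable section

/-- The normalized Hausdorff measure `m_n` on the limit set `J_n`. -/
def normMeas (g : ℕ → ℝ → ℝ) (h : ℕ → ℝ) (n : ℕ) (A : Set ℝ) : ENNReal :=
  μH[h n] (A ∩ limitSet g n) / μH[h n] (limitSet g n)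

lemma wordComp_mem (b : ℕ → ℝ) (hb0 : b 0 = 1) (hbanti : StrictAnti b) (hpos : ∀ k, 0 < b k)
    (w : List ℕ) : ∀ x ∈ Set.Icc (0:ℝ) 1, wordComp (gAff b) w x ∈ Set.Icc (0:ℝ) 1 := by
  induction w with
  | nil => intro x hx; exact hx
  | cons k w ih =>
    intro x hx
    obtain ⟨h0, h1⟩ := ih x hx
    have e1 : b k ≤ b (k-1) := hbanti.antitone (Nat.sub_le k 1)
    have e2 : b (k-1) ≤ 1 := hb0 ▸ hbanti.antitone (Nat.zero_le _)
    have e3 := hpos k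
    simp only [wordComp, Function.comp, gAff, Set.mem_Icc]
    constructor <;> nlinarith

lemma gAff_mem_s4 (b : ℕ → ℝ) (hbanti : StrictAnti b) (k : ℕ) (y : ℝ)
    (hy : y ∈ Set.Icc (0:ℝ) 1) : gAff b k y ∈ Set.Icc (b k) (b (k-1)) := by
  obtain ⟨h0, h1⟩ := hy
  have e1 : b k ≤ b (k-1) := hbanti.antitone (Nat.sub_le k 1)
  simp only [gAff, Set.mem_Icc]
  constructor <;> nlinarith

lemma limitSet_sub (b : ℕ → ℝ) (hb0 : b 0 = 1) (hbanti : StrictAnti b) (hpos : ∀ k, 0 < b k)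
    (n p q : ℕ) :
    Set.Icc (b (p+q)) (b p) ∩ limitSet (gAff b) n ⊆
      Set.range b ∪ ⋃ k ∈ (Finset.Icc 1 n).filter (fun k => p < k ∧ k ≤ p + q),
        gAff b k '' limitSet (gAff b) n := by
  rintro x ⟨hx, hJ⟩
  by_cases hr : x ∈ Set.range b
  · exact Or.inl hr
  right
  have hne : ∀ k, x ≠ b k := fun k hk => hr ⟨k, hk.symm⟩
  have key : ∀ l : ℕ, ∃ k w, 1 ≤ k ∧ k ≤ n ∧ w.length = l ∧ (∀ i ∈ w, 1 ≤ i ∧ i ≤ n) ∧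
      b k < x ∧ x < b (k-1) ∧ ∃ y ∈ wordComp (gAff b) w '' Set.Icc (0:ℝ) 1, gAff b k y = x := by
    intro l
    have := Set.mem_iInter.1 hJ l
    simp only [Set.mem_iUnion, Set.mem_setOf_eq] at this
    obtain ⟨w, ⟨hl, hw⟩, z, hz, hzx⟩ := this
    cases w with
    | nil => simp at hl
    | cons k w =>
      have hk := hw k (by simp)
      have hm := gAff_mem_s4 b hbanti k _ (wordComp_mem b hb0 hbanti hpos w z hz)
      have hzx' : gAff b k (wordComp (gAff b) w z) = x := hzx
      rw [hzx'] at hm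
      exact ⟨k, w, hk.1, hk.2, by simpa using hl, fun i hi => hw i (by simp [hi]),
        lt_of_le_of_ne hm.1 (hne k).symm, lt_of_le_of_ne hm.2 (hne _), _, ⟨z, hz, rfl⟩, hzx'⟩
  obtain ⟨k, w, k1, kn, -, -, hl, hu, y, hy, hyx⟩ := key 0
  have hpk : p < k := by
    by_contra hc
    have := hbanti.antitone (not_lt.1 hc)
    linarith [hx.2]
  have hkq : k ≤ p + q := by
    by_contra hc
    have := hbanti.antitone (show p + q ≤ k - 1 by omega)
    linarith [hx.1]
  simp only [Set.mem_iUnion, Finset.mem_filter, Finset.mem_Icc]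
  refine ⟨k, ⟨⟨k1, kn⟩, hpk, hkq⟩, y, ?_, hyx⟩
  refine Set.mem_iInter.2 fun l => ?_
  obtain ⟨k', w', k1', kn', hlen, hw', hl', hu', y', hy', hyx'⟩ := key (l+1)
  have hkk : k' = k := by
    rcases lt_trichotomy k' k with hc | hc | hc
    · have := hbanti.antitone (show k' ≤ k - 1 by omega)
      linarith
    · exact hc
    · have := hbanti.antitone (show k ≤ k' - 1 by omega)
      linarith
  subst hkk
  have hyy : y' = y := by
    have ha : 0 < b (k'-1) - b k' := by linarith
    have : (b (k'-1) - b k') * y' = (b (k'-1) - b k') * y := by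
      simp only [gAff] at hyx hyx'
      linarith
    exact mul_left_cancel₀ ha.ne' this
  subst hyy
  simp only [Set.mem_iUnion, Set.mem_setOf_eq]
  exact ⟨w', ⟨hlen, hw'⟩, hy'⟩

lemma gAff_lip (b : ℕ → ℝ) (hbanti : StrictAnti b) (k : ℕ) :
    LipschitzWith (Real.toNNReal (b (k-1) - b k)) (gAff b k) := by
  have e1 : b k ≤ b (k-1) := hbanti.antitone (Nat.sub_le k 1)
  refine LipschitzWith.of_dist_le_mul fun x y => ?_
  rw [Real.coe_toNNReal _ (by linarith), Real.dist_eq, Real.dist_eq]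
  have : gAff b k x - gAff b k y = (b (k-1) - b k) * -(x - y) := by
    simp only [gAff]; ring
  rw [this, abs_mul, abs_neg, abs_of_nonneg (by linarith)]

lemma sum_rpow_le (s : Finset ℕ) (f : ℕ → ℝ) (hf : ∀ i ∈ s, 0 ≤ f i) (d : ℝ) (hd : 0 < d)
    (hd1 : d ≤ 1) : ∑ i ∈ s, f i ^ d ≤ (s.card : ℝ) ^ (1 - d) * (∑ i ∈ s, f i) ^ d := by
  have H := Real.rpow_sum_le_const_mul_sum_rpow_of_nonneg (s := s) (f := fun i => f i ^ d)
    (p := 1 / d) (by rw [le_div_iff₀ hd]; linarith) (fun i hi => Real.rpow_nonneg (hf i hi) _)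
  have h1 : ∑ i ∈ s, (f i ^ d) ^ (1 / d) = ∑ i ∈ s, f i := by
    refine Finset.sum_congr rfl fun i hi => ?_
    rw [← Real.rpow_mul (hf i hi), mul_one_div_cancel hd.ne', Real.rpow_one]
  rw [h1] at H
  have h0 : 0 ≤ ∑ i ∈ s, f i ^ d := Finset.sum_nonneg fun i hi => Real.rpow_nonneg (hf i hi) _
  have H2 := Real.rpow_le_rpow (Real.rpow_nonneg h0 _) H hd.le
  rw [← Real.rpow_mul h0, one_div_mul_cancel hd.ne', Real.rpow_one,
    Real.mul_rpow (by positivity) (Finset.sum_nonneg hf), ← Real.rpow_mul (by positivity)] at H2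
  have : (1 / d - 1) * d = 1 - d := by field_simp
  rwa [this] at H2

lemma sum_tele (b : ℕ → ℝ) (p q : ℕ) :
    ∑ k ∈ Finset.Icc (p+1) (p+q), (b (k-1) - b k) = b p - b (p+q) := by
  induction q with
  | zero => simp
  | succ q ih =>
    rw [← add_assoc, Finset.sum_Icc_succ_top (by omega), ih]
    simp

lemma main_bound (b : ℕ → ℝ) (hb0 : b 0 = 1) (hbanti : StrictAnti b) (hpos : ∀ k, 0 < b k)
    (h : ℕ → ℝ) (n : ℕ) (hd : 0 < h n) (hd1 : h n ≤ 1) (p q : ℕ) (hq : 1 ≤ q) :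
    normMeas (gAff b) h n (Set.Icc (b (p + q)) (b p)) /
          ENNReal.ofReal ((b p - b (p + q)) ^ h n) ≤ ENNReal.ofReal ((n:ℝ) ^ (1 - h n)) := by
  have hgap : 0 < b p - b (p+q) := sub_pos.2 (hbanti (by omega))
  have ha : ∀ k, 0 ≤ b (k-1) - b k := fun k => sub_nonneg.2 (hbanti.antitone (Nat.sub_le k 1))
  set s := (Finset.Icc 1 n).filter (fun k => p < k ∧ k ≤ p + q) with hs
  have hD : 0 < (b p - b (p+q)) ^ h n := Real.rpow_pos_of_pos hgap _
  have hsum : ∑ k ∈ s, (b (k-1) - b k) ^ h n ≤ (n:ℝ) ^ (1 - h n) * (b p - b (p+q)) ^ h n := by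
    refine (sum_rpow_le s _ (fun k _ => ha k) _ hd hd1).trans ?_
    have hc : s.card ≤ n := by
      refine (Finset.card_filter_le _ _).trans (by simp)
    have hs2 : ∑ k ∈ s, (b (k-1) - b k) ≤ b p - b (p+q) := by
      rw [← sum_tele]
      refine Finset.sum_le_sum_of_subset_of_nonneg ?_ (fun k _ _ => ha k)
      intro k hk
      simp only [hs, Finset.mem_filter, Finset.mem_Icc] at hk ⊢
      omega
    refine mul_le_mul (Real.rpow_le_rpow (by positivity) (by exact_mod_cast hc) (by linarith))
      (Real.rpow_le_rpow (Finset.sum_nonneg fun k _ => ha k) hs2 hd.le)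
      (Real.rpow_nonneg (Finset.sum_nonneg fun k _ => ha k) _) (by positivity)
  have hmeas : μH[h n] (Set.Icc (b (p + q)) (b p) ∩ limitSet (gAff b) n) ≤
      ENNReal.ofReal (∑ k ∈ s, (b (k-1) - b k) ^ h n) * μH[h n] (limitSet (gAff b) n) := by
    have hz : (μH[h n] : Measure ℝ) (Set.range b) = 0 := by
      haveI := MeasureTheory.Measure.noAtoms_hausdorff ℝ hd
      exact (Set.countable_range b).measure_zero _
    refine (measure_mono (limitSet_sub b hb0 hbanti hpos n p q)).trans ?_
    refine (measure_union_le _ _).trans ?_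
    rw [hz, zero_add]
    refine (measure_biUnion_finset_le _ _).trans ?_
    rw [ENNReal.ofReal_sum_of_nonneg (fun k _ => Real.rpow_nonneg (ha k) _), Finset.sum_mul]
    refine Finset.sum_le_sum fun k _ => ?_
    refine ((gAff_lip b hbanti k).lipschitzOnWith.hausdorffMeasure_image_le hd.le).trans ?_
    rw [← ENNReal.ofReal_rpow_of_nonneg (ha k) hd.le]
    rfl
  rw [ENNReal.div_le_iff (by simpa using hD) ENNReal.ofReal_ne_top,
    ← ENNReal.ofReal_mul (by positivity)]
  refine le_trans ?_ (ENNReal.ofReal_le_ofReal hsum)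
  exact ENNReal.div_le_of_le_mul hmeas

/-- In the linear setting, under (C1),
    `limsup_{n→∞} sup{ m_n([b_{p+q}, b_p])/(b_p - b_{p+q})^{h_n} : p ≥ 0, q ≥ 1 } ≤ 1`. -/
theorem linear_density_on_b_intervals
    (b : ℕ → ℝ) (h : ℕ → ℝ)
    (hb0 : b 0 = 1) (hbanti : StrictAnti b)
    (hblim : Filter.Tendsto b Filter.atTop (nhds 0))
    (hmoran : ∀ n, 1 ≤ n → ∑ k ∈ Finset.Icc 1 n, (b (k - 1) - b k) ^ h n = 1)
    (hdimH : ∀ n, 1 ≤ n → dimH (limitSet (gAff b) n) = ENNReal.ofReal (h n))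
    (hC1 : Filter.Tendsto (fun n : ℕ => (1 - h n) * Real.log n) Filter.atTop (nhds 0)) :
    Filter.limsup
      (fun n : ℕ => ⨆ (p : ℕ) (q : ℕ) (_ : 1 ≤ q),
        normMeas (gAff b) h n (Set.Icc (b (p + q)) (b p)) /
          ENNReal.ofReal ((b p - b (p + q)) ^ h n))
      Filter.atTop ≤ 1 := by
  have hpos : ∀ k, 0 < b k := fun k =>
    lt_of_le_of_lt (hbanti.antitone.le_of_tendsto hblim (k+1)) (hbanti (Nat.lt_succ_self k))
  have hle : ∀ᶠ n : ℕ in atTop, (⨆ (p : ℕ) (q : ℕ) (_ : 1 ≤ q),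
        normMeas (gAff b) h n (Set.Icc (b (p + q)) (b p)) /
          ENNReal.ofReal ((b p - b (p + q)) ^ h n)) ≤
      ENNReal.ofReal (Real.exp ((1 - h n) * Real.log n)) := by
    filter_upwards [eventually_ge_atTop 2] with n hn
    have hm := hmoran n (by omega)
    have ha : ∀ k ∈ Finset.Icc 1 n, 0 < b (k-1) - b k := fun k hk =>
      sub_pos.2 (hbanti (by have := (Finset.mem_Icc.1 hk).1; omega))
    have ha1 : ∀ k, b (k-1) - b k ≤ 1 := fun k => by
      have : b (k-1) ≤ 1 := hb0 ▸ hbanti.antitone (Nat.zero_le _)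
      linarith [hpos k]
    have hd : 0 < h n := by
      by_contra hc
      have : ∑ k ∈ Finset.Icc 1 n, (1:ℝ) ≤ ∑ k ∈ Finset.Icc 1 n, (b (k - 1) - b k) ^ h n :=
        Finset.sum_le_sum fun k hk =>
          Real.one_le_rpow_of_pos_of_le_one_of_nonpos (ha k hk) (ha1 k) (not_lt.1 hc)
      rw [hm] at this
      simp at this
      omega
    have hd1 : h n ≤ 1 := by
      by_contra hc
      have : ∑ k ∈ Finset.Icc 1 n, (b (k - 1) - b k) ^ h n ≤
          ∑ k ∈ Finset.Icc 1 n, (b (k - 1) - b k) :=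
        Finset.sum_le_sum fun k hk => by
          have := Real.rpow_le_rpow_of_exponent_ge (ha k hk) (ha1 k) (not_le.1 hc).le
          rwa [Real.rpow_one] at this
      have t := sum_tele b 0 n
      simp only [zero_add] at t
      rw [hm, t, hb0] at this
      linarith [hpos n]
    refine iSup_le fun p => iSup_le fun q => iSup_le fun hq => ?_
    have := main_bound b hb0 hbanti hpos h n hd hd1 p q hq
    have hn0 : (0:ℝ) < n := by exact_mod_cast (show 0 < n by omega)
    rwa [Real.rpow_def_of_pos hn0, mul_comm (Real.log n)] at this
  refine (limsup_le_limsup hle).trans ?_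
  have ht : Tendsto (fun n : ℕ => ENNReal.ofReal (Real.exp ((1 - h n) * Real.log n))) atTop
      (𝓝 1) := by
    have := ENNReal.tendsto_ofReal ((Real.continuous_exp.tendsto 0).comp hC1)
    simpa using this
  exact ht.limsup_eq.le
end
end

section
/- In the linear setting, assume (C1): lim_{n→∞} (1 − h_n)·ln n = 0, and (C2): sup_{k≥0} (b_k − b_{k+1})/b_{k+1} < ∞. Then limsup_{n→∞} sup{ m_n([s,t])/(t − s)^{h_n} : 0 ≤ s < t ≤ 1 and (s,t) ∩ J_n ≠ ∅ } ≤ 1. -/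
open Set Filter MeasureTheory Topology

noncomputable section

lemma aux_holder {n : ℕ} {h : ℝ} (h0 : 0 < h) (h1 : h ≤ 1) (s : Finset ℕ) (hs : s.card ≤ n)
    (a : ℕ → ℝ) (ha : ∀ i ∈ s, 0 ≤ a i) :
    ∑ i ∈ s, a i ^ h ≤ (n : ℝ) ^ (1 - h) * (∑ i ∈ s, a i) ^ h := by
  have hp : 1 ≤ 1 / h := by rw [le_div_iff₀ h0]; linarith
  have key := Real.rpow_sum_le_const_mul_sum_rpow_of_nonneg (f := fun i => a i ^ h) s hp
    (fun i hi => Real.rpow_nonneg (ha i hi) _)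
  have e : ∑ i ∈ s, (a i ^ h) ^ (1 / h) = ∑ i ∈ s, a i := by
    apply Finset.sum_congr rfl
    intro i hi
    rw [← Real.rpow_mul (ha i hi), mul_one_div_cancel h0.ne', Real.rpow_one]
  rw [e] at key
  have hS : 0 ≤ ∑ i ∈ s, a i ^ h := Finset.sum_nonneg fun i hi => Real.rpow_nonneg (ha i hi) _
  have hA : 0 ≤ ∑ i ∈ s, a i := Finset.sum_nonneg ha
  have k2 := Real.rpow_le_rpow (Real.rpow_nonneg hS _) key h0.le
  rw [← Real.rpow_mul hS, one_div_mul_cancel h0.ne', Real.rpow_one,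
    Real.mul_rpow (by positivity) hA, ← Real.rpow_mul (by positivity)] at k2
  have e2 : (1 / h - 1) * h = 1 - h := by field_simp
  rw [e2] at k2
  refine k2.trans ?_
  gcongr

lemma aux_two {h : ℝ} (h0 : 0 < h) (h1 : h ≤ 1) {x y : ℝ} (hx : 0 ≤ x) (hy : 0 ≤ y) :
    x ^ h + y ^ h ≤ (2 : ℝ) ^ (1 - h) * (x + y) ^ h := by
  have := aux_holder (n := 2) h0 h1 (Finset.range 2) (by simp) (fun i => if i = 0 then x else y)
    (by intro i _; split_ifs <;> assumption)
  simpa [Finset.sum_range_succ] using this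

lemma aux_three {h : ℝ} (h0 : 0 < h) (h1 : h ≤ 1) {x y z : ℝ} (hx : 0 ≤ x) (hy : 0 ≤ y)
    (hz : 0 ≤ z) :
    x ^ h + y ^ h + z ^ h ≤ (3 : ℝ) ^ (1 - h) * (x + y + z) ^ h := by
  have := aux_holder (n := 3) h0 h1 (Finset.range 3) (by simp)
    (fun i => if i = 0 then x else if i = 1 then y else z)
    (by intro i _; split_ifs <;> assumption)
  simpa [Finset.sum_range_succ] using this

/-- location of a point -/
lemma aux_loc {b : ℕ → ℝ} (hb : StrictAnti b) (hb0 : b 0 = 1) (n : ℕ) (x : ℝ)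
    (hx : b n ≤ x) (hx1 : x ≤ 1) (hn : 1 ≤ n) :
    ∃ k u, k < n ∧ 0 ≤ u ∧ u ≤ 1 ∧ x = b k - (b k - b (k+1)) * u := by
  have hex : ∃ k, b (k+1) ≤ x := ⟨n - 1, by rwa [Nat.sub_add_cancel hn]⟩
  classical
  let k := Nat.find hex
  have hk : b (k+1) ≤ x := Nat.find_spec hex
  have hkn : k ≤ n - 1 := Nat.find_min' hex (by rwa [Nat.sub_add_cancel hn])
  have hk2 : x ≤ b k := by
    rcases Nat.eq_zero_or_pos k with h | h
    · rw [h, hb0]; exact hx1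
    · have := Nat.find_min hex (m := k - 1) (by omega)
      rw [Nat.sub_add_cancel h] at this
      linarith
  have hpos : 0 < b k - b (k+1) := sub_pos.2 (hb (Nat.lt_succ_self k))
  refine ⟨k, (b k - x) / (b k - b (k+1)), by omega, by apply div_nonneg <;> linarith, ?_, ?_⟩
  · rw [div_le_one hpos]; linarith
  · rw [mul_div_cancel₀ _ hpos.ne']; ring

section core
variable {b : ℕ → ℝ} {n : ℕ} {h : ℝ} {Φ : ℝ → ℝ}

lemma aux_block (hb : StrictAnti b)
    (h0 : 0 < h) (h1 : h ≤ 1)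
    (hself : ∀ k u, k < n → 0 ≤ u → u ≤ 1 →
      Φ (b k - (b k - b (k+1)) * u) = Φ (b k) - (b k - b (k+1)) ^ h * Φ u)
    (hΦ1 : Φ 1 = 1) (p q : ℕ) (hpq : p ≤ q) (hq : q ≤ n) :
    Φ (b p) - Φ (b q) ≤ (n : ℝ) ^ (1 - h) * (b p - b q) ^ h := by
  have e : ∀ q, p ≤ q → q ≤ n → Φ (b p) - Φ (b q) = ∑ i ∈ Finset.Ico p q, (b i - b (i+1)) ^ h := by
    intro q hpq
    induction q, hpq using Nat.le_induction with
    | base => simp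
    | succ q hpq ih =>
      intro hq
      rw [Finset.sum_Ico_succ_top hpq, ← ih (by omega)]
      have := hself q 1 (by omega) zero_le_one le_rfl
      rw [hΦ1, mul_one, mul_one, sub_sub_cancel] at this
      rw [this]; ring
  have e2 : b p - b q = ∑ i ∈ Finset.Ico p q, (b i - b (i+1)) := by
    have := Finset.sum_Ico_sub b hpq
    rw [← neg_sub (b q), ← this, ← Finset.sum_neg_distrib]
    simp
  rw [e q hpq hq, e2]
  exact aux_holder h0 h1 _ (by simp; omega) (fun i => b i - b (i+1))
    (fun i _ => sub_nonneg.2 (hb (Nat.lt_succ_self i)).le)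

/-- bound for `[y,1]` -/
lemma aux_G (hb : StrictAnti b) (hb0 : b 0 = 1) (hpos : ∀ k, 0 < b k)
    (h0 : 0 < h) (h1 : h ≤ 1) (hn : 1 ≤ n)
    (hmono : Monotone Φ) (hΦ0 : ∀ x, 0 ≤ Φ x) (hΦn : Φ (b n) = 0) (hΦ1 : Φ 1 = 1)
    (hself : ∀ k u, k < n → 0 ≤ u → u ≤ 1 →
      Φ (b k - (b k - b (k+1)) * u) = Φ (b k) - (b k - b (k+1)) ^ h * Φ u)
    {C : ℝ} (hNC : (n : ℝ) ^ (1 - h) ≤ C) (hC : ∀ u, 0 ≤ u → u ≤ 1 → Φ u ≤ C * u ^ h)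
    (y : ℝ) (hy1 : y ≤ 1) :
    1 - Φ y ≤ 2 ^ (1 - h) * C * (1 - y) ^ h := by
  have hN : 0 ≤ (n : ℝ) ^ (1 - h) := by positivity
  have hC0 : 0 ≤ C := hN.trans hNC
  have main : ∀ y, b n ≤ y → y ≤ 1 → 1 - Φ y ≤ 2 ^ (1 - h) * C * (1 - y) ^ h := by
    intro y hy hy1
    obtain ⟨k, u, hk, hu0, hu1, rfl⟩ := aux_loc hb hb0 n y hy hy1 hn
    rw [hself k u hk hu0 hu1]
    have hbl := aux_block hb h0 h1 hself hΦ1 0 k (Nat.zero_le _) hk.le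
    rw [hb0, hΦ1] at hbl
    have ha : 0 ≤ b k - b (k+1) := sub_nonneg.2 (hb (Nat.lt_succ_self k)).le
    have hA : 0 ≤ 1 - b k := by rw [← hb0]; exact sub_nonneg.2 (hb.antitone (Nat.zero_le _))
    have h2 := aux_two h0 h1 hA (mul_nonneg ha hu0)
    have h3 : (b k - b (k+1)) ^ h * Φ u ≤ C * ((b k - b (k+1)) * u) ^ h := by
      rw [Real.mul_rpow ha hu0]
      have := mul_le_mul_of_nonneg_left (hC u hu0 hu1) (Real.rpow_nonneg ha h)
      linarith
    have h4 : (n : ℝ) ^ (1 - h) * (1 - b k) ^ h ≤ C * (1 - b k) ^ h := by gcongr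
    have h5 := mul_le_mul_of_nonneg_left h2 hC0
    have e : 1 - (b k - (b k - b (k+1)) * u) = 1 - b k + (b k - b (k+1)) * u := by ring
    rw [e]
    linarith
  rcases le_total (b n) y with hy | hy
  · exact main y hy hy1
  · have hbn : b n ≤ 1 := by rw [← hb0]; exact hb.antitone (Nat.zero_le _)
    have := main (b n) le_rfl hbn
    rw [hΦn] at this
    have h6 : 2 ^ (1 - h) * C * (1 - b n) ^ h ≤ 2 ^ (1 - h) * C * (1 - y) ^ h := by
      gcongr
    linarith [hΦ0 y]

/-- bound for `[0,x]` -/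
lemma aux_F (hb : StrictAnti b) (hb0 : b 0 = 1) (hpos : ∀ k, 0 < b k)
    (h0 : 0 < h) (h1 : h ≤ 1) (hn : 1 ≤ n)
    (hmono : Monotone Φ) (hΦ0 : ∀ x, 0 ≤ Φ x) (hΦn : Φ (b n) = 0) (hΦ1 : Φ 1 = 1)
    (hself : ∀ k u, k < n → 0 ≤ u → u ≤ 1 →
      Φ (b k - (b k - b (k+1)) * u) = Φ (b k) - (b k - b (k+1)) ^ h * Φ u)
    {M : ℝ} (hM0 : 0 < M) (hM : ∀ k, b k - b (k+1) ≤ M * b (k+1))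
    {D : ℝ} (hND : (n : ℝ) ^ (1 - h) ≤ D) (hD : ∀ y, y ≤ 1 → 1 - Φ y ≤ D * (1 - y) ^ h)
    (x : ℝ) (hx : 0 ≤ x) (hx1 : x ≤ 1) :
    Φ x ≤ ((n : ℝ) ^ (1 - h) * 2 ^ (1 - h) + (D - (n : ℝ) ^ (1 - h)) * (M / (M + 1)) ^ h) * x ^ h := by
  have hN : 0 ≤ (n : ℝ) ^ (1 - h) := by positivity
  have hDN : 0 ≤ D - (n : ℝ) ^ (1 - h) := sub_nonneg.2 hND
  rcases le_total x (b n) with hy | hy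
  · have : Φ x ≤ 0 := by rw [← hΦn]; exact hmono hy
    have : 0 ≤ ((n : ℝ) ^ (1 - h) * 2 ^ (1 - h) + (D - (n : ℝ) ^ (1 - h)) * (M / (M + 1)) ^ h) * x ^ h := by
      positivity
    linarith
  obtain ⟨k, u, hk, hu0, hu1, rfl⟩ := aux_loc hb hb0 n x hy hx1 hn
  have ha : 0 ≤ b k - b (k+1) := sub_nonneg.2 (hb (Nat.lt_succ_self k)).le
  have hB0 : 0 ≤ (b k - b (k+1)) * (1 - u) := mul_nonneg ha (by linarith)
  have hA := hpos (k+1)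
  have hs1 := hself k 1 hk zero_le_one le_rfl
  rw [hΦ1, mul_one, mul_one, sub_sub_cancel] at hs1
  rw [hself k u hk hu0 hu1]
  have hbl := aux_block hb h0 h1 hself hΦ1 (k+1) n hk le_rfl
  rw [hΦn, sub_zero] at hbl
  have hbl2 : Φ (b (k+1)) ≤ (n : ℝ) ^ (1 - h) * b (k+1) ^ h := by
    refine hbl.trans ?_
    have : 0 ≤ b (k+1) - b n := sub_nonneg.2 (hb.antitone hk)
    have := hpos n
    gcongr
    linarith
  have h3 : (b k - b (k+1)) ^ h * (1 - Φ u) ≤ D * ((b k - b (k+1)) * (1 - u)) ^ h := by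
    rw [Real.mul_rpow ha (by linarith)]
    have := mul_le_mul_of_nonneg_left (hD u hu1) (Real.rpow_nonneg ha h)
    linarith
  have h2 := mul_le_mul_of_nonneg_left (aux_two h0 h1 hA.le hB0) hN
  have e : b k - (b k - b (k+1)) * u = b (k+1) + (b k - b (k+1)) * (1 - u) := by ring
  rw [e]
  set A := b (k+1) with hAdef
  set B := (b k - A) * (1 - u) with hB
  have hBA : B ≤ M / (M + 1) * (A + B) := by
    have : B ≤ M * A := by
      have := hM k
      have : B ≤ b k - A := by rw [hB]; nlinarith
      linarith
    rw [div_mul_eq_mul_div, le_div_iff₀ (by linarith)]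
    nlinarith
  have h7 : B ^ h ≤ (M / (M + 1)) ^ h * (A + B) ^ h := by
    rw [← Real.mul_rpow (by positivity) (by positivity)]
    gcongr
  have h8 := mul_le_mul_of_nonneg_left h7 hDN
  nlinarith

/-- uniform bound for `[0,x]` -/
lemma aux_F' (hb : StrictAnti b) (hb0 : b 0 = 1) (hpos : ∀ k, 0 < b k)
    (h0 : 0 < h) (h1 : h ≤ 1) (hn : 1 ≤ n)
    (hmono : Monotone Φ) (hΦ0 : ∀ x, 0 ≤ Φ x) (hΦn : Φ (b n) = 0) (hΦ1 : Φ 1 = 1)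
    (hself : ∀ k u, k < n → 0 ≤ u → u ≤ 1 →
      Φ (b k - (b k - b (k+1)) * u) = Φ (b k) - (b k - b (k+1)) ^ h * Φ u)
    {M : ℝ} (hM0 : 0 < M) (hM : ∀ k, b k - b (k+1) ≤ M * b (k+1))
    (hθ : 2 ^ (1 - h) * (M / (M + 1)) ^ h < 1) {C : ℝ}
    (hC : C = (n : ℝ) ^ (1 - h) * (2 ^ (1 - h) - (M / (M + 1)) ^ h) /
      (1 - 2 ^ (1 - h) * (M / (M + 1)) ^ h)) :
    (n : ℝ) ^ (1 - h) ≤ C ∧ ∀ x, 0 ≤ x → x ≤ 1 → Φ x ≤ C * x ^ h := by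
  have hN : 0 ≤ (n : ℝ) ^ (1 - h) := by positivity
  have hE : (1 : ℝ) ≤ 2 ^ (1 - h) := Real.one_le_rpow (by norm_num) (by linarith)
  have hθ0 : 0 ≤ (M / (M + 1)) ^ h := by positivity
  have hNC : (n : ℝ) ^ (1 - h) ≤ C := by
    rw [hC, le_div_iff₀ (by linarith)]
    gcongr
    nlinarith
  refine ⟨hNC, ?_⟩
  let S : Set ℝ := (fun x => Φ x / x ^ h) '' Ioc 0 1
  have hle1 : ∀ x, 0 < x → x ≤ 1 → Φ x / x ^ h ≤ 1 / (b n) ^ h := by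
    intro x hx hx1
    have := hpos n
    rcases le_total x (b n) with hy | hy
    · have : Φ x ≤ 0 := by rw [← hΦn]; exact hmono hy
      have : Φ x / x ^ h ≤ 0 := div_nonpos_of_nonpos_of_nonneg this (by positivity)
      have : 0 ≤ 1 / (b n) ^ h := by positivity
      linarith
    · have : Φ x ≤ 1 := by rw [← hΦ1]; exact hmono hx1
      gcongr
  have hbdd : BddAbove S := ⟨1 / (b n) ^ h, by
    rintro _ ⟨x, ⟨hx, hx1⟩, rfl⟩; exact hle1 x hx hx1⟩
  have hne : S.Nonempty := ⟨_, 1, ⟨zero_lt_one, le_rfl⟩, rfl⟩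
  have hΦz : Φ 0 = 0 := le_antisymm ((hmono (hpos n).le).trans hΦn.le) (hΦ0 0)
  have ofle : ∀ K, sSup S ≤ K → ∀ x, 0 ≤ x → x ≤ 1 → Φ x ≤ K * x ^ h := by
    intro K hK x hx hx1
    rcases hx.eq_or_lt with rfl | hx
    · simp [hΦz, Real.zero_rpow h0.ne']
    · have : Φ x / x ^ h ≤ K := (le_csSup hbdd ⟨x, ⟨hx, hx1⟩, rfl⟩).trans hK
      rwa [div_le_iff₀ (by positivity)] at this
  apply ofle
  by_contra! hlt
  have hNS : (n : ℝ) ^ (1 - h) ≤ sSup S := hNC.trans hlt.le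
  have hG := aux_G hb hb0 hpos h0 h1 hn hmono hΦ0 hΦn hΦ1 hself hNS (ofle _ le_rfl)
  have hND : (n : ℝ) ^ (1 - h) ≤ 2 ^ (1 - h) * sSup S := by nlinarith
  have hF := aux_F hb hb0 hpos h0 h1 hn hmono hΦ0 hΦn hΦ1 hself hM0 hM hND hG
  have := csSup_le hne (a := (n : ℝ) ^ (1 - h) * 2 ^ (1 - h) +
      (2 ^ (1 - h) * sSup S - (n : ℝ) ^ (1 - h)) * (M / (M + 1)) ^ h) (by
    rintro _ ⟨x, ⟨hx, hx1⟩, rfl⟩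
    show Φ x / x ^ h ≤ _
    rw [div_le_iff₀ (by positivity)]
    exact hF x hx.le hx1)
  have : sSup S ≤ C := by
    rw [hC, le_div_iff₀ (by linarith)]
    nlinarith
  linarith

lemma aux_all (hb : StrictAnti b) (hb0 : b 0 = 1) (hpos : ∀ k, 0 < b k)
    (h0 : 0 < h) (h1 : h ≤ 1) (hn : 1 ≤ n)
    (hmono : Monotone Φ) (hΦ0 : ∀ x, 0 ≤ Φ x) (hΦn : Φ (b n) = 0) (hΦ1 : Φ 1 = 1)
    (hself : ∀ k u, k < n → 0 ≤ u → u ≤ 1 →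
      Φ (b k - (b k - b (k+1)) * u) = Φ (b k) - (b k - b (k+1)) ^ h * Φ u)
    {M : ℝ} (hM0 : 0 < M) (hM : ∀ k, b k - b (k+1) ≤ M * b (k+1))
    (hθ : 2 ^ (1 - h) * (M / (M + 1)) ^ h < 1) {C : ℝ}
    (hC : C = (n : ℝ) ^ (1 - h) * (2 ^ (1 - h) - (M / (M + 1)) ^ h) /
      (1 - 2 ^ (1 - h) * (M / (M + 1)) ^ h)) (s t : ℝ) (hs : 0 ≤ s) (hst : s < t) (ht : t ≤ 1) :
    Φ t - Φ s ≤ 3 ^ (1 - h) * (2 ^ (1 - h) * C) * (t - s) ^ h := by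
  obtain ⟨hNC, hF⟩ := aux_F' hb hb0 hpos h0 h1 hn hmono hΦ0 hΦn hΦ1 hself hM0 hM hθ hC
  have hG := aux_G hb hb0 hpos h0 h1 hn hmono hΦ0 hΦn hΦ1 hself hNC hF
  have hN1 : (1 : ℝ) ≤ (n : ℝ) ^ (1 - h) :=
    Real.one_le_rpow (by exact_mod_cast hn) (by linarith)
  have hE : (1 : ℝ) ≤ 2 ^ (1 - h) := Real.one_le_rpow (by norm_num) (by linarith)
  have hT : (1 : ℝ) ≤ 3 ^ (1 - h) := Real.one_le_rpow (by norm_num) (by linarith)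
  clear hC
  have hCD : C ≤ 2 ^ (1 - h) * C := by nlinarith
  set D := 2 ^ (1 - h) * C with hDdef
  have hND : (n : ℝ) ^ (1 - h) ≤ D := hNC.trans hCD
  have hD0 : 0 ≤ D := by linarith
  clear_value D
  have hΦz : ∀ s, s ≤ b n → Φ s = 0 := fun s hs =>
    le_antisymm (by rw [← hΦn]; exact hmono hs) (hΦ0 s)
  -- bound for right end piece
  have hR : ∀ k u, k < n → 0 ≤ u → u ≤ 1 →
      Φ (b k - (b k - b (k+1)) * u) - Φ (b (k+1)) ≤ D * ((b k - b (k+1)) * (1 - u)) ^ h := by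
    intro k u hk hu0 hu1
    have ha : 0 ≤ b k - b (k+1) := sub_nonneg.2 (hb (Nat.lt_succ_self k)).le
    have hs1 := hself k 1 hk zero_le_one le_rfl
    rw [hΦ1, mul_one, mul_one, sub_sub_cancel] at hs1
    rw [hself k u hk hu0 hu1, Real.mul_rpow ha (by linarith), hs1]
    have := mul_le_mul_of_nonneg_left (hG u hu1) (Real.rpow_nonneg ha h)
    linarith
  set ρ := max (1 - b 1) (b 1) with hρ
  have hb1 : b 1 < 1 := by rw [← hb0]; exact hb zero_lt_one
  have hρ1 : ρ < 1 := max_lt (by linarith [hpos 1]) hb1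
  have hρ0 : 0 < ρ := lt_max_of_lt_right (hpos 1)
  have haρ : ∀ k, b k - b (k+1) ≤ ρ := by
    intro k
    rcases Nat.eq_zero_or_pos k with rfl | hk
    · rw [hb0]; exact le_max_left _ _
    · have : b k ≤ b 1 := hb.antitone hk
      exact le_trans (by linarith [hpos (k+1)]) (le_max_right _ _)
  have main : ∀ l : ℕ, ∀ s t, 0 ≤ s → s < t → t ≤ 1 → ρ ^ l ≤ t - s →
      Φ t - Φ s ≤ 3 ^ (1 - h) * D * (t - s) ^ h := by
    intro l
    induction l with
    | zero =>
      intro s t hs hst ht hl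
      have e : t - s = 1 := by rw [pow_zero] at hl; linarith
      rw [e, Real.one_rpow]
      have : Φ t ≤ 1 := by rw [← hΦ1]; exact hmono ht
      nlinarith [hΦ0 s]
    | succ l ih =>
      intro s t hs hst ht hl
      rcases le_total t (b n) with htn | htn
      · rw [hΦz t htn, hΦz s (by linarith)]
        have : 0 ≤ t - s := by linarith
        have : 0 ≤ 3 ^ (1 - h) * D * (t - s) ^ h := by positivity
        linarith
      obtain ⟨q, u, hq, hu0, hu1, rfl⟩ := aux_loc hb hb0 n t htn ht hn
      have haq : 0 < b q - b (q+1) := sub_pos.2 (hb (Nat.lt_succ_self q))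
      have hRq := hR q u hq hu0 hu1
      have hz0 : 0 ≤ (b q - b (q+1)) * (1 - u) := mul_nonneg haq.le (by linarith)
      -- finishing: three pieces
      have fin : ∀ p, q + 1 ≤ p → p ≤ n → ∀ z, 0 ≤ z → Φ (b p) - Φ s ≤ D * z ^ h →
          z ≤ b p - s → Φ (b q - (b q - b (q+1)) * u) - Φ s ≤
            3 ^ (1 - h) * D * (b q - (b q - b (q+1)) * u - s) ^ h := by
        intro p hp hpn z hz hzs hzl
        have hbl := aux_block hb h0 h1 hself hΦ1 (q+1) p hp hpn
        have hw : 0 ≤ b (q+1) - b p := sub_nonneg.2 (hb.antitone hp)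
        have h3 := mul_le_mul_of_nonneg_left (aux_three h0 h1 hz0 hw hz) hD0
        have h4 : (n : ℝ) ^ (1 - h) * (b (q+1) - b p) ^ h ≤ D * (b (q+1) - b p) ^ h := by gcongr
        have h5 : 3 ^ (1 - h) * D * ((b q - b (q+1)) * (1 - u) + (b (q+1) - b p) + z) ^ h ≤
            3 ^ (1 - h) * D * (b q - (b q - b (q+1)) * u - s) ^ h := by
          gcongr
          linarith
        linarith
      rcases le_total s (b n) with hsn | hsn
      · refine fin n hq le_rfl 0 le_rfl ?_ (by linarith)
        rw [hΦn, hΦz s hsn, Real.zero_rpow h0.ne']; simp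
      obtain ⟨p, v, hp, hv0, hv1, hsv⟩ := aux_loc hb hb0 n s hsn (by linarith) hn
      have hap : 0 < b p - b (p+1) := sub_pos.2 (hb (Nat.lt_succ_self p))
      rcases lt_trichotomy q p with hqp | hqp | hqp
      · refine fin p hqp hp.le ((b p - b (p+1)) * v) (by positivity) ?_ (by linarith)
        rw [hsv, hself p v hp hv0 hv1, Real.mul_rpow hap.le hv0]
        have h1 : Φ v ≤ D * v ^ h := (hF v hv0 hv1).trans (by gcongr)
        have := mul_le_mul_of_nonneg_left h1 (Real.rpow_nonneg hap.le h)
        linarith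
      · subst hqp
        have huv : u < v := by
          by_contra! hc
          nlinarith
        have e : b q - (b q - b (q+1)) * u - s = (b q - b (q+1)) * (v - u) := by rw [hsv]; ring
        have hl' : ρ ^ l ≤ v - u := by
          rw [e, pow_succ] at hl
          have : (b q - b (q+1)) * (v - u) ≤ ρ * (v - u) := by
            have : 0 ≤ v - u := by linarith
            have := haρ q
            gcongr
          have : ρ * ρ ^ l ≤ ρ * (v - u) := by linarith
          exact le_of_mul_le_mul_left this hρ0
        have i := ih u v hu0 huv hv1 hl'
        rw [e, hself q u hq hu0 hu1, hsv, hself q v hq hv0 hv1,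
          Real.mul_rpow haq.le (by linarith)]
        have := mul_le_mul_of_nonneg_left i (Real.rpow_nonneg haq.le h)
        linarith
      · exfalso
        have h2 : b q ≤ b (p+1) := hb.antitone hqp
        have : (b p - b (p+1)) * v ≤ b p - b (p+1) := by nlinarith
        have : 0 ≤ (b q - b (q+1)) * u := by positivity
        linarith
  obtain ⟨l, hl⟩ := exists_pow_lt_of_lt_one (sub_pos.2 hst) hρ1
  exact main l s t hs hst ht hl.le

end core

section meas
variable {b : ℕ → ℝ} {n : ℕ}

lemma aux_a (hb : StrictAnti b) (k : ℕ) : 0 < b k - b (k+1) :=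
  sub_pos.2 (hb (Nat.lt_succ_self k))

lemma aux_g_mem (hb : StrictAnti b) (k : ℕ) {x : ℝ} (hx : x ∈ Icc (0:ℝ) 1) :
    gAff b (k+1) x ∈ Icc (b (k+1)) (b k) := by
  have := aux_a hb k
  obtain ⟨h0, h1⟩ := hx
  simp only [gAff, Nat.add_sub_cancel]
  constructor <;> nlinarith

lemma aux_b01 (hb : StrictAnti b) (hb0 : b 0 = 1) (hpos : ∀ k, 0 < b k) (k : ℕ) :
    b k ∈ Icc (0:ℝ) 1 := ⟨(hpos k).le, by rw [← hb0]; exact hb.antitone (Nat.zero_le _)⟩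

lemma aux_word_mem (hb : StrictAnti b) (hb0 : b 0 = 1) (hpos : ∀ k, 0 < b k) (w : List ℕ)
    (hw : ∀ i ∈ w, 1 ≤ i ∧ i ≤ n) {z : ℝ} (hz : z ∈ Icc (0:ℝ) 1) :
    wordComp (gAff b) w z ∈ Icc (0:ℝ) 1 := by
  induction w with
  | nil => exact hz
  | cons k w ih =>
    obtain ⟨j, rfl⟩ : ∃ j, k = j + 1 := ⟨k - 1, by have := hw k (by simp); omega⟩
    have := aux_g_mem hb j (ih (fun i hi => hw i (by simp [hi])))
    exact ⟨(aux_b01 hb hb0 hpos _).1.trans this.1, this.2.trans (aux_b01 hb hb0 hpos _).2⟩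

lemma aux_mem_iff (x : ℝ) : x ∈ limitSet (gAff b) n ↔ ∀ l : ℕ, ∃ w : List ℕ,
    (w.length = l + 1 ∧ ∀ i ∈ w, 1 ≤ i ∧ i ≤ n) ∧ ∃ z ∈ Icc (0:ℝ) 1,
      wordComp (gAff b) w z = x := by
  simp only [limitSet, mem_iInter, mem_iUnion, mem_image, mem_ofPred_eq, exists_prop]

lemma aux_J_sub (hb : StrictAnti b) (hb0 : b 0 = 1) (hpos : ∀ k, 0 < b k) :
    limitSet (gAff b) n ⊆ Icc (b n) 1 := by
  intro x hx
  obtain ⟨w, ⟨hl, hw⟩, z, hz, rfl⟩ := (aux_mem_iff x).1 hx 0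
  cases w with
  | nil => simp at hl
  | cons k w =>
    have hk := hw k (by simp)
    obtain ⟨j, rfl⟩ : ∃ j, k = j + 1 := ⟨k - 1, by omega⟩
    have := aux_g_mem hb j (aux_word_mem hb hb0 hpos w (fun i hi => hw i (by simp [hi])) hz)
    exact ⟨(hb.antitone hk.2).trans this.1, this.2.trans (aux_b01 hb hb0 hpos _).2⟩

lemma aux_fwd (hb : StrictAnti b) (hb0 : b 0 = 1) (hpos : ∀ k, 0 < b k) {k : ℕ} (hk : k < n)
    {x : ℝ} (hx : x ∈ limitSet (gAff b) n) : gAff b (k+1) x ∈ limitSet (gAff b) n := by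
  rw [aux_mem_iff]
  intro l
  cases l with
  | zero =>
    refine ⟨[k+1], ⟨rfl, by simp; omega⟩, x, ?_, rfl⟩
    have := aux_J_sub hb hb0 hpos hx
    exact ⟨(hpos n).le.trans this.1, this.2⟩
  | succ l =>
    obtain ⟨w, ⟨hl, hw⟩, z, hz, e⟩ := (aux_mem_iff x).1 hx l
    refine ⟨(k+1) :: w, ⟨by simp [hl], ?_⟩, z, hz, by simp [wordComp, e]⟩
    intro i hi
    rcases List.mem_cons.1 hi with rfl | hi
    · omega
    · exact hw i hi

lemma aux_bwd (hb : StrictAnti b) (hb0 : b 0 = 1) (hpos : ∀ k, 0 < b k) {k : ℕ}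
    {y : ℝ} (hy : gAff b (k+1) y ∈ limitSet (gAff b) n)
    (h1 : b (k+1) < gAff b (k+1) y) (h2 : gAff b (k+1) y < b k) : y ∈ limitSet (gAff b) n := by
  rw [aux_mem_iff]
  intro l
  obtain ⟨w, ⟨hl, hw⟩, z, hz, e⟩ := (aux_mem_iff _).1 hy (l+1)
  cases w with
  | nil => simp at hl
  | cons j w =>
    have hj := hw j (by simp)
    obtain ⟨j, rfl⟩ : ∃ i, j = i + 1 := ⟨j - 1, by omega⟩
    have hm := aux_g_mem hb j (aux_word_mem hb hb0 hpos w (fun i hi => hw i (by simp [hi])) hz)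
    have e' : gAff b (j+1) (wordComp (gAff b) w z) = gAff b (k+1) y := e
    rw [e'] at hm
    have hjk : j = k := by
      rcases lt_trichotomy j k with h | h | h
      · have : b k ≤ b (j+1) := hb.antitone h
        linarith [hm.1]
      · exact h
      · have : b j ≤ b (k+1) := hb.antitone h
        linarith [hm.2]
    subst hjk
    refine ⟨w, ⟨by simpa using hl, fun i hi => hw i (by simp [hi])⟩, z, hz, ?_⟩
    have := aux_a hb j
    simp only [gAff, Nat.add_sub_cancel] at e'
    have : (b j - b (j+1)) * wordComp (gAff b) w z = (b j - b (j+1)) * y := by linarith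
    exact mul_left_cancel₀ (aux_a hb j).ne' this

open scoped Pointwise in
lemma aux_scale (hb : StrictAnti b) {h : ℝ} (h0 : 0 < h) (k : ℕ) (A : Set ℝ) :
    μH[h] (gAff b (k+1) '' A) = ENNReal.ofReal ((b k - b (k+1)) ^ h) * μH[h] A := by
  have ha := aux_a hb k
  have e : gAff b (k+1) '' A = (IsometryEquiv.subLeft (b k)) '' ((b k - b (k+1)) • A) := by
    rw [← image_smul, image_image]
    rfl
  rw [e, IsometryEquiv.hausdorffMeasure_image, Measure.hausdorffMeasure_smul₀ h0.le ha.ne']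
  rw [ENNReal.smul_def, smul_eq_mul]
  congr 1
  rw [← ENNReal.ofReal_coe_nnreal]
  simp [abs_of_pos ha]

lemma aux_self (hb : StrictAnti b) (hb0 : b 0 = 1) (hpos : ∀ k, 0 < b k) {h : ℝ} (h0 : 0 < h)
    {k : ℕ} (hk : k < n) {u : ℝ} (hu0 : 0 ≤ u) (hu1 : u ≤ 1) :
    μH[h] (Icc (b k - (b k - b (k+1)) * u) (b k) ∩ limitSet (gAff b) n) =
      ENNReal.ofReal ((b k - b (k+1)) ^ h) * μH[h] (Icc 0 u ∩ limitSet (gAff b) n) := by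
  have ha := aux_a hb k
  rw [← aux_scale hb h0]
  apply le_antisymm
  · have hsub : Icc (b k - (b k - b (k+1)) * u) (b k) ∩ limitSet (gAff b) n ⊆
        gAff b (k+1) '' (Icc 0 u ∩ limitSet (gAff b) n) ∪ ({b k} ∪ {b (k+1)}) := by
      rintro x ⟨⟨hx1, hx2⟩, hxJ⟩
      by_cases hxa : x = b k
      · right; left; exact hxa
      by_cases hxb : x = b (k+1)
      · right; right; exact hxb
      left
      have hlt2 : x < b k := lt_of_le_of_ne hx2 hxa
      have hlt1 : b (k+1) < x := lt_of_le_of_ne (by nlinarith) (Ne.symm hxb)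
      have e : gAff b (k+1) ((b k - x) / (b k - b (k+1))) = x := by
        simp only [gAff, Nat.add_sub_cancel]
        rw [mul_div_cancel₀ _ ha.ne']; ring
      refine ⟨(b k - x) / (b k - b (k+1)), ⟨⟨?_, ?_⟩, ?_⟩, e⟩
      · apply div_nonneg <;> linarith
      · rw [div_le_iff₀ ha]; linarith
      · apply aux_bwd hb hb0 hpos (k := k) <;> rw [e] <;> assumption
    have := Measure.nullSingletonClass_hausdorff ℝ h0
    refine (measure_mono hsub).trans ((measure_union_le _ _).trans ?_)
    have : μH[h] (({b k} : Set ℝ) ∪ {b (k+1)}) = 0 := by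
      rw [measure_union_null_iff]; simp
    rw [this, add_zero]
  · apply measure_mono
    rintro _ ⟨y, ⟨⟨hy0, hyu⟩, hyJ⟩, rfl⟩
    refine ⟨?_, aux_fwd hb hb0 hpos hk hyJ⟩
    simp only [gAff, Nat.add_sub_cancel]
    constructor <;> nlinarith

lemma aux_Phi (hb : StrictAnti b) (hb0 : b 0 = 1) (hpos : ∀ k, 0 < b k) (h : ℕ → ℝ)
    (h0 : 0 < h n) (hc0 : μH[h n] (limitSet (gAff b) n) ≠ 0)
    (hcT : μH[h n] (limitSet (gAff b) n) ≠ ⊤) :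
    ∃ Φ : ℝ → ℝ, Monotone Φ ∧ (∀ x, 0 ≤ Φ x) ∧ Φ (b n) = 0 ∧ Φ 1 = 1 ∧
      (∀ k u, k < n → 0 ≤ u → u ≤ 1 →
        Φ (b k - (b k - b (k+1)) * u) = Φ (b k) - (b k - b (k+1)) ^ (h n) * Φ u) ∧
      ∀ s t, 0 ≤ s → s ≤ t → normMeas (gAff b) h n (Icc s t) = ENNReal.ofReal (Φ t - Φ s) := by
  have hns := Measure.nullSingletonClass_hausdorff ℝ h0
  have hfin : ∀ A : Set ℝ, μH[h n] (A ∩ limitSet (gAff b) n) ≠ ⊤ := fun A =>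
    measure_ne_top_of_subset inter_subset_right hcT
  have hcpos : 0 < (μH[h n] (limitSet (gAff b) n)).toReal := ENNReal.toReal_pos hc0 hcT
  have hJ := aux_J_sub (n := n) hb hb0 hpos
  have hnT : ∀ A : Set ℝ, normMeas (gAff b) h n A ≠ ⊤ := fun A =>
    ENNReal.div_ne_top (hfin A) hc0
  have hadd : ∀ s t, 0 ≤ s → s ≤ t → μH[h n] (Icc 0 t ∩ limitSet (gAff b) n) =
      μH[h n] (Icc 0 s ∩ limitSet (gAff b) n) + μH[h n] (Icc s t ∩ limitSet (gAff b) n) := by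
    intro s t hs hst
    apply le_antisymm
    · rw [← Icc_union_Icc_eq_Icc hs hst, union_inter_distrib_right]
      exact measure_union_le _ _
    · have e1 : μH[h n] (Icc s t ∩ limitSet (gAff b) n) =
          μH[h n].restrict (Icc s t) (limitSet (gAff b) n) := by
        rw [Measure.restrict_apply' measurableSet_Icc, inter_comm]
      have e2 : μH[h n] (Icc 0 t ∩ limitSet (gAff b) n) =
          μH[h n].restrict (Icc 0 t) (limitSet (gAff b) n) := by
        rw [Measure.restrict_apply' measurableSet_Icc, inter_comm]
      have e3 : μH[h n] (Icc 0 s ∩ limitSet (gAff b) n) =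
          μH[h n].restrict (Icc 0 s) (limitSet (gAff b) n) := by
        rw [Measure.restrict_apply' measurableSet_Icc, inter_comm]
      have e4 : μH[h n].restrict (Icc s t) = μH[h n].restrict (Ioc s t) :=
        Measure.restrict_congr_set Ioc_ae_eq_Icc.symm
      rw [e1, e2, e3, e4, ← Icc_union_Ioc_eq_Icc hs hst, Measure.restrict_union ?_ measurableSet_Ioc]
      · rfl
      · rw [Set.disjoint_left]
        intro x hx hx'
        exact absurd hx.2 (not_le.2 hx'.1)
  have hΦadd : ∀ s t, 0 ≤ s → s ≤ t → (normMeas (gAff b) h n (Icc s t)).toReal =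
      (normMeas (gAff b) h n (Icc 0 t)).toReal - (normMeas (gAff b) h n (Icc 0 s)).toReal := by
    intro s t hs hst
    simp only [normMeas, ENNReal.toReal_div]
    rw [hadd s t hs hst, ENNReal.toReal_add (hfin _) (hfin _)]
    ring
  refine ⟨fun x => (normMeas (gAff b) h n (Icc 0 x)).toReal, ?_, ?_, ?_, ?_, ?_, ?_⟩
  · intro x y hxy
    apply ENNReal.toReal_mono (hnT _)
    simp only [normMeas]
    gcongr
  · intro x; exact ENNReal.toReal_nonneg
  · have : μH[h n] (Icc 0 (b n) ∩ limitSet (gAff b) n) = 0 := by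
      refine measure_mono_null (t := {b n}) ?_ (by simp)
      rintro x ⟨hx, hxJ⟩
      exact le_antisymm hx.2 (hJ hxJ).1
    simp [normMeas, this]
  · have : Icc 0 1 ∩ limitSet (gAff b) n = limitSet (gAff b) n :=
      inter_eq_right.2 (hJ.trans (Icc_subset_Icc_left (hpos n).le))
    simp only [normMeas, this, ENNReal.div_self hc0 hcT, ENNReal.toReal_one]
  · intro k u hk hu0 hu1
    have ha := aux_a hb k
    have h1 : 0 ≤ b k - (b k - b (k+1)) * u := by nlinarith [hpos (k+1)]
    have h2 : b k - (b k - b (k+1)) * u ≤ b k := by nlinarith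
    have := hΦadd _ _ h1 h2
    have h3 : (normMeas (gAff b) h n (Icc (b k - (b k - b (k+1)) * u) (b k))).toReal =
        (b k - b (k+1)) ^ (h n) * (normMeas (gAff b) h n (Icc 0 u)).toReal := by
      simp only [normMeas]
      rw [aux_self hb hb0 hpos h0 hk hu0 hu1, mul_div_assoc, ENNReal.toReal_mul,
        ENNReal.toReal_ofReal (by positivity)]
    dsimp only
    linarith
  · intro s t hs hst
    dsimp only
    rw [← hΦadd s t hs hst, ENNReal.ofReal_toReal (hnT _)]

lemma aux_h (hb : StrictAnti b) (hb0 : b 0 = 1) (hpos : ∀ k, 0 < b k) {h : ℝ} (hn : 2 ≤ n)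
    (hm : ∑ k ∈ Finset.Icc 1 n, (b (k - 1) - b k) ^ h = 1) : 0 < h ∧ h ≤ 1 := by
  have e : ∀ f : ℕ → ℝ, ∑ k ∈ Finset.Icc 1 n, f k = ∑ k ∈ Finset.range n, f (k+1) := by
    intro f
    rw [Finset.range_eq_Ico, Finset.sum_Ico_add' f 0 n 1]
    rfl
  rw [e] at hm
  simp only [Nat.add_sub_cancel] at hm
  have hle : ∀ k, b k - b (k+1) ≤ 1 := fun k => by
    linarith [(aux_b01 hb hb0 hpos k).2, hpos (k+1)]
  constructor
  · by_contra! hc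
    have : ∑ k ∈ Finset.range n, (1:ℝ) ≤ ∑ k ∈ Finset.range n, (b k - b (k+1)) ^ h :=
      Finset.sum_le_sum fun k _ => Real.one_le_rpow_of_pos_of_le_one_of_nonpos (aux_a hb k) (hle k) hc
    rw [hm] at this
    simp at this
    omega
  · by_contra! hc
    have : ∑ k ∈ Finset.range n, (b k - b (k+1)) ^ h ≤ ∑ k ∈ Finset.range n, (b k - b (k+1)) := by
      apply Finset.sum_le_sum
      intro k _
      have := Real.rpow_le_rpow_of_exponent_ge (aux_a hb k) (hle k) hc.le
      rwa [Real.rpow_one] at this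
    rw [hm, Finset.sum_range_sub', hb0] at this
    linarith [hpos n]

end meas

/-- In the linear setting, under (C1) and (C2),
    `limsup_{n→∞} sup{ m_n([s,t])/(t-s)^{h_n} : 0 ≤ s < t ≤ 1, (s,t) ∩ J_n ≠ ∅ } ≤ 1`. -/
theorem linear_density_all_intervals
    (b : ℕ → ℝ) (h : ℕ → ℝ)
    (hb0 : b 0 = 1) (hbanti : StrictAnti b)
    (hblim : Filter.Tendsto b Filter.atTop (nhds 0))
    (hmoran : ∀ n, 1 ≤ n → ∑ k ∈ Finset.Icc 1 n, (b (k - 1) - b k) ^ h n = 1)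
    (hdimH : ∀ n, 1 ≤ n → dimH (limitSet (gAff b) n) = ENNReal.ofReal (h n))
    (hC1 : Filter.Tendsto (fun n : ℕ => (1 - h n) * Real.log n) Filter.atTop (nhds 0))
    (hC2 : ∃ M : ℝ, ∀ k : ℕ, (b k - b (k + 1)) / b (k + 1) ≤ M) :
    Filter.limsup
      (fun n : ℕ => ⨆ (s : ℝ) (t : ℝ)
        (_ : 0 ≤ s ∧ s < t ∧ t ≤ 1 ∧ (Set.Ioo s t ∩ limitSet (gAff b) n).Nonempty),
        normMeas (gAff b) h n (Set.Icc s t) / ENNReal.ofReal ((t - s) ^ h n))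
      Filter.atTop ≤ 1 := by
  have hpos : ∀ k, 0 < b k := fun k =>
    lt_of_le_of_lt (hbanti.antitone.le_of_tendsto hblim (k+1)) (hbanti (Nat.lt_succ_self k))
  obtain ⟨M, hM⟩ := hC2
  have hM' : ∀ k, b k - b (k+1) ≤ M * b (k+1) := fun k => (div_le_iff₀ (hpos (k+1))).1 (hM k)
  have hM0 : 0 < M := lt_of_lt_of_le (div_pos (aux_a hbanti 0) (hpos 1)) (hM 0)
  have hh : ∀ n, 2 ≤ n → 0 < h n ∧ h n ≤ 1 := fun n hn =>
    aux_h hbanti hb0 hpos hn (hmoran n (by omega))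
  -- the limits
  have hε : Tendsto (fun n => 1 - h n) atTop (𝓝 0) := by
    refine tendsto_of_tendsto_of_tendsto_of_le_of_le' tendsto_const_nhds hC1 ?_ ?_
    · filter_upwards [eventually_ge_atTop 2] with n hn
      linarith [(hh n hn).2]
    · filter_upwards [eventually_ge_atTop 3] with n hn
      have h1 : 1 ≤ Real.log n := by
        rw [Real.le_log_iff_exp_le (by positivity)]
        have : (3 : ℝ) ≤ n := by exact_mod_cast hn
        linarith [Real.exp_one_lt_d9]
      nlinarith [(hh n (by omega)).2]
  have hh1 : Tendsto h atTop (𝓝 1) := by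
    have := (tendsto_const_nhds (x := (1:ℝ))).sub hε
    simpa using this
  have hN : Tendsto (fun n : ℕ => (n : ℝ) ^ (1 - h n)) atTop (𝓝 1) := by
    have := (Real.continuous_exp.tendsto 0).comp hC1
    rw [Real.exp_zero] at this
    refine this.congr' ?_
    filter_upwards [eventually_ge_atTop 1] with n hn
    have : (0:ℝ) < n := by exact_mod_cast hn
    rw [Real.rpow_def_of_pos this, mul_comm]
    rfl
  have h2 : Tendsto (fun n : ℕ => (2 : ℝ) ^ (1 - h n)) atTop (𝓝 1) := by
    have := (tendsto_const_nhds (x := (2:ℝ))).rpow hε (Or.inl (by norm_num))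
    simpa using this
  have h3 : Tendsto (fun n : ℕ => (3 : ℝ) ^ (1 - h n)) atTop (𝓝 1) := by
    have := (tendsto_const_nhds (x := (3:ℝ))).rpow hε (Or.inl (by norm_num))
    simpa using this
  have hθ : Tendsto (fun n : ℕ => (M / (M + 1)) ^ h n) atTop (𝓝 (M / (M + 1))) := by
    have := (tendsto_const_nhds (x := M / (M + 1))).rpow hh1 (Or.inl (by positivity))
    simpa using this
  have hθ1 : M / (M + 1) < 1 := by rw [div_lt_one (by linarith)]; linarith
  have h2θ := h2.mul hθ
  rw [one_mul] at h2θ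
  have hE : Tendsto (fun n : ℕ => (3:ℝ) ^ (1 - h n) * (2 ^ (1 - h n) *
      ((n : ℝ) ^ (1 - h n) * (2 ^ (1 - h n) - (M / (M + 1)) ^ h n) /
      (1 - 2 ^ (1 - h n) * (M / (M + 1)) ^ h n)))) atTop (𝓝 1) := by
    have hne : 1 - M / (M + 1) ≠ 0 := by linarith
    have := h3.mul (h2.mul ((hN.mul (h2.sub hθ)).div (tendsto_const_nhds.sub h2θ) hne))
    rw [one_mul, one_mul, one_mul, div_self hne] at this
    exact this
  have hE' := ENNReal.tendsto_ofReal hE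
  rw [ENNReal.ofReal_one] at hE'
  rw [← hE'.limsup_eq]
  apply Filter.limsup_le_limsup ?_
  filter_upwards [eventually_ge_atTop 2, h2θ.eventually_lt_const hθ1] with n hn hlt
  obtain ⟨hn0, hn1⟩ := hh n hn
  refine iSup_le fun s => iSup_le fun t => iSup_le fun ⟨hs, hst, ht, _⟩ => ?_
  have hts : 0 < t - s := sub_pos.2 hst
  by_cases hc0 : μH[h n] (limitSet (gAff b) n) = 0
  · have : μH[h n] (Icc s t ∩ limitSet (gAff b) n) = 0 := measure_mono_null inter_subset_right hc0
    simp [normMeas, this]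
  by_cases hcT : μH[h n] (limitSet (gAff b) n) = ⊤
  · simp [normMeas, hcT]
  obtain ⟨Φ, hmono, hΦ0, hΦn, hΦ1, hself, hΦ⟩ := aux_Phi hbanti hb0 hpos h hn0 hc0 hcT
  have key := aux_all hbanti hb0 hpos hn0 hn1 (by omega) hmono hΦ0 hΦn hΦ1 hself hM0 hM' hlt rfl
    s t hs hst ht
  have hp : 0 < (t - s) ^ h n := Real.rpow_pos_of_pos hts _
  rw [hΦ s t hs hst.le, ← ENNReal.ofReal_div_of_pos hp]
  apply ENNReal.ofReal_le_ofReal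
  rwa [div_le_iff₀ hp]
end
end

section
/- In the linear setting, suppose there exists t_0 < 1 such that ∑_{k=1}^∞ a_k^t < ∞ for all t ≥ t_0. Then for every n ≥ 1 and every t with t_0 ≤ t ≤ h_n, one has 1 − h_n ≤ (∑_{k=n+1}^∞ a_k^t) / (∑_{k=1}^∞ a_k · ln(1/a_k)). -/
open Set Filter MeasureTheory Topology

noncomputable section

/-- In the linear setting, if `∑_{k=1}^∞ a_k^t < ∞` for all `t ≥ t₀` (some `t₀ < 1`), then for
    every `n ≥ 1` and every `t` with `t₀ ≤ t ≤ h_n`: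
    `1 - h_n ≤ (∑_{k=n+1}^∞ a_k^t) / (∑_{k=1}^∞ a_k ln(1/a_k))`. -/
theorem linear_dimension_deficit_bound
    (b : ℕ → ℝ) (h : ℕ → ℝ)
    (hb0 : b 0 = 1) (hbanti : StrictAnti b)
    (hblim : Filter.Tendsto b Filter.atTop (nhds 0))
    (hmoran : ∀ n, 1 ≤ n → ∑ k ∈ Finset.Icc 1 n, (b (k - 1) - b k) ^ h n = 1)
    (hdimH : ∀ n, 1 ≤ n → dimH (limitSet (gAff b) n) = ENNReal.ofReal (h n))
    (t₀ : ℝ) (ht₀ : t₀ < 1)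
    (hsum : ∀ t : ℝ, t₀ ≤ t → Summable (fun k : ℕ => (b k - b (k + 1)) ^ t)) :
    ∀ n : ℕ, 1 ≤ n → ∀ t : ℝ, t₀ ≤ t → t ≤ h n →
      1 - h n ≤ (∑' k : ℕ, (b (n + k) - b (n + k + 1)) ^ t) /
        (∑' k : ℕ, (b k - b (k + 1)) * Real.log (1 / (b k - b (k + 1)))) := by
  intro n hn t ht0 hth
  have hbpos : ∀ k, 0 < b k := by
    intro k
    have h1 : (0 : ℝ) ≤ b (k + 1) := hbanti.antitone.le_of_tendsto hblim (k + 1)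
    exact lt_of_le_of_lt h1 (hbanti (Nat.lt_succ_self k))
  have hapos : ∀ k, 0 < b k - b (k + 1) := fun k => sub_pos.2 (hbanti (Nat.lt_succ_self k))
  have hale : ∀ k, b k - b (k + 1) < 1 := by
    intro k
    have h1 : b k ≤ b 0 := hbanti.antitone (Nat.zero_le k)
    have h2 := hbpos (k + 1)
    linarith
  have hm : ∑ k ∈ Finset.range n, (b k - b (k + 1)) ^ h n = 1 := by
    rw [← hmoran n hn, Finset.sum_bij (fun k _ => k + 1)]
    · intro k hk
      simp only [Finset.mem_range] at hk
      simp only [Finset.mem_Icc]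
      omega
    · intro x _ y _ hxy
      omega
    · intro k hk
      simp only [Finset.mem_Icc] at hk
      exact ⟨k - 1, by simp only [Finset.mem_range]; omega, by omega⟩
    · intro k _
      simp
  have hlt : h n < 1 := by
    by_contra hge
    push Not at hge
    have h1 : ∑ k ∈ Finset.range n, (b k - b (k + 1)) ^ h n
        ≤ ∑ k ∈ Finset.range n, (b k - b (k + 1)) := by
      apply Finset.sum_le_sum
      intro k _
      calc (b k - b (k + 1)) ^ h n ≤ (b k - b (k + 1)) ^ (1 : ℝ) :=
            Real.rpow_le_rpow_of_exponent_ge (hapos k) (hale k).le hge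
        _ = _ := Real.rpow_one _
    rw [Finset.sum_range_sub' b n, hm, hb0] at h1
    linarith [hbpos n]
  have ha1 : HasSum (fun k => b k - b (k + 1)) 1 := by
    rw [hasSum_iff_tendsto_nat_of_nonneg (fun k => (hapos k).le)]
    simp only [Finset.sum_range_sub' b, hb0]
    simpa using hblim.const_sub 1
  have hsh := hsum (h n) (ht0.trans hth)
  have hpt : ∀ k, (1 - h n) * ((b k - b (k + 1)) * Real.log (1 / (b k - b (k + 1))))
      ≤ (b k - b (k + 1)) ^ h n - (b k - b (k + 1)) := by
    intro k
    have hk := hapos k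
    generalize b k - b (k + 1) = a at hk
    have h1 : a ^ h n = a * Real.exp ((1 - h n) * Real.log (1 / a)) := by
      rw [one_div, Real.log_inv, Real.rpow_def_of_pos hk]
      nth_rewrite 2 [← Real.exp_log hk]
      rw [← Real.exp_add]
      ring_nf
    have h2 := mul_le_mul_of_nonneg_left
      (Real.add_one_le_exp ((1 - h n) * Real.log (1 / a))) hk.le
    rw [h1]
    linarith
  have hlpos : ∀ k, 0 < (b k - b (k + 1)) * Real.log (1 / (b k - b (k + 1))) := by
    intro k
    apply mul_pos (hapos k)
    apply Real.log_pos
    rw [lt_div_iff₀ (hapos k)]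
    linarith [hale k]
  have hd : 0 < 1 - h n := by linarith
  have hsl : Summable (fun k => (b k - b (k + 1)) * Real.log (1 / (b k - b (k + 1)))) := by
    have h1 := Summable.of_nonneg_of_le (fun k => (mul_pos hd (hlpos k)).le) hpt
      (hsh.sub ha1.summable)
    exact (summable_mul_left_iff hd.ne').1 h1
  have hL : 0 < ∑' k : ℕ, (b k - b (k + 1)) * Real.log (1 / (b k - b (k + 1))) :=
    hsl.tsum_pos (fun k => (hlpos k).le) 0 (hlpos 0)
  rw [le_div_iff₀ hL, ← tsum_mul_left]
  have h1 := Summable.tsum_le_tsum hpt (hsl.mul_left _) (hsh.sub ha1.summable)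
  rw [hsh.tsum_sub ha1.summable, ha1.tsum_eq, ← hsh.sum_add_tsum_nat_add n, hm] at h1
  have h2 : ∑' k, (b (k + n) - b (k + n + 1)) ^ h n
      ≤ ∑' k, (b (k + n) - b (k + n + 1)) ^ t := by
    apply Summable.tsum_le_tsum
    · intro k
      exact Real.rpow_le_rpow_of_exponent_ge (hapos _) (hale _).le hth
    · exact (summable_nat_add_iff n).2 hsh
    · exact (summable_nat_add_iff n).2 (hsum t ht0)
  simp only [add_comm n]
  linarith
end
end
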